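/- Let n ≥ 4 and let V ∈ L^∞(ℝⁿ) be real-valued with |V(x)| ≤ C₀⟨x⟩^{-δ} for all x ∈ ℝⁿ, for some constants C₀ > 0 and δ > (n+2)/2. Let ψ ∈ C₀^∞((0,+∞)) be real-valued and set Ψ(t;h) = e^{itG} ψ(h²G) − e^{itG₀} ψ(h²G₀). Then there exists a constant C > 0, independent of t and h, such that for all t ∈ ℝ and all 0 < h ≤ 1, ‖Ψ(t;h)‖_{L²(ℝⁿ)→L²(ℝⁿ)} ≤ C h. -/

import Mathlib

/-!
The idea is to compare the two functional calculi through Stone's formula, using high-energy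
resolvent estimates with polynomial weights.

Let `A = ⟨x⟩^{-3/2}`. Since `n ≥ 4`, the decay exponent `δ` exceeds `3`, so `V = A W A` with
`W = ⟨x⟩³ V` bounded (`exists_factorization`).

*Limiting absorption.* The multiplier `Y = x/⟨x⟩ · ∇ + ½ div (x/⟨x⟩)` is skew-adjoint and has a
positive commutator with `-Δ` (`morawetz_pos`); positivity of the zeroth-order term is where
`n ≥ 4` enters. Pairing `(-Δ - z) u` with `Y u` and with `⟨x⟩⁻³ u` gives
`‖A R₀(z) A‖ ≤ C (Re z)^{-1/2}` for `Re z ≥ 1`, `0 < |Im z| ≤ 1` (`lap_schwartz`,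
`norm_weighted_rs_le`). At high energy `‖A R₀(z) A W‖ ≤ 1/2`, so that `‖A R(z) u‖ ≤ 2 ‖A R₀(z) u‖`
(`weighted_rs_le`).

*Kato smoothing.* A `T T*` argument turns the resolvent bound into a bound for `Im z ‖A R₀(z)‖²`
(`eps_weighted_sq_le`). With `P = A R₀(l + iε) u` and `Q = A R₀(l - iε) u`, where `u` is localised
in energy, `‖P‖² + ‖Q‖² = ‖P - Q‖² + 2 Re ⟨Q, P⟩`. As `P - Q = 2iε A R₀(l + iε) R₀(l - iε) u`, the
integral over `l` of the first term is bounded by the total mass of the spectral measure; the mixed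
term is the boundary value of a function holomorphic in the upper half plane, and its integral is
handled by moving the contour (`norm_integral_mixed_le`). The outcome is
`∫_a^b ‖A R₀(l ± iε) u‖² dl ≤ C a^{-1/2} ‖u‖²`, uniformly in `ε` (`kato`).

*Comparison.* By Stone's formula (`stone`), `f(G) - f(G₀)` is the strong limit of integrals of `f`
against the difference of the two Poisson kernels. The resolvent identity
`R - R₀ = -R V R₀ = -(A R*)* W (A R₀)`, Cauchy–Schwarz and Kato smoothing bound it by
`C a^{-1/2} sup |f|` when `f` is supported in `(a, b]` with `b ≤ κ a` (`norm_fc_sub_le`). For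
`f(x) = e^{itx} ψ(h² x)` one has `a = α / h²`, which gives `O(h)` for small `h`; for `h` bounded
below the trivial bound `2 sup |ψ|` is enough.
-/

open MeasureTheory Filter Topology Real Set

noncomputable section

abbrev Euc (n : ℕ) := EuclideanSpace ℝ (Fin n)

abbrev L2 (n : ℕ) := Lp ℂ 2 (volume : Measure (Euc n))

/-- Japanese bracket `⟨x⟩ = (1+|x|²)^{1/2}`. -/
def jb {n : ℕ} (x : Euc n) : ℝ := Real.sqrt (1 + ‖x‖ ^ 2)

/-- `⟨r⟩ = (1+r²)^{1/2}` for a real number `r`. -/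
def jbR (r : ℝ) : ℝ := Real.sqrt (1 + r ^ 2)

/-- The Euclidean Laplacian of a function. -/
def lapl {n : ℕ} (f : Euc n → ℂ) (x : Euc n) : ℂ :=
  ∑ i : Fin n,
    iteratedFDeriv ℝ 2 f x ![EuclideanSpace.single i (1 : ℝ), EuclideanSpace.single i (1 : ℝ)]

/-- `T` is the (unique) self-adjoint realization of the Schrödinger operator `-Δ + V`
on `L²(ℝⁿ)`: `T` is self-adjoint and acts as `-Δ + V` on Schwartz functions. -/
structure IsSchrodingerOp {n : ℕ} (V : Euc n → ℝ) (T : L2 n →ₗ.[ℂ] L2 n) : Prop where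
  selfAdjoint : IsSelfAdjoint T
  eq_on_schwartz : ∀ f : SchwartzMap (Euc n) ℂ,
    ∃ u : T.domain, ((u : L2 n) : Euc n → ℂ) =ᵐ[volume] ⇑f ∧
      ((T u : L2 n) : Euc n → ℂ) =ᵐ[volume] fun x => -lapl (⇑f) x + (V x : ℂ) * f x

/-- `fc` is the Borel functional calculus of the self-adjoint operator `T`:
a bounded-pointwise-continuous algebra homomorphism on bounded Borel functions
whose value on `(· - z)⁻¹` is the resolvent `(T - z)⁻¹`. -/
structure IsBorelFunctionalCalculus {n : ℕ} (T : L2 n →ₗ.[ℂ] L2 n)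
    (fc : (ℝ → ℂ) → (L2 n →L[ℂ] L2 n)) : Prop where
  map_one : fc (fun _ => 1) = ContinuousLinearMap.id ℂ (L2 n)
  map_add : ∀ f g : ℝ → ℂ, Measurable f → Measurable g → (∃ M, ∀ x, ‖f x‖ ≤ M) →
    (∃ M, ∀ x, ‖g x‖ ≤ M) → fc (fun x => f x + g x) = fc f + fc g
  map_mul : ∀ f g : ℝ → ℂ, Measurable f → Measurable g → (∃ M, ∀ x, ‖f x‖ ≤ M) →
    (∃ M, ∀ x, ‖g x‖ ≤ M) → fc (fun x => f x * g x) = (fc f).comp (fc g)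
  norm_le : ∀ (f : ℝ → ℂ) (M : ℝ), Measurable f → (∀ x, ‖f x‖ ≤ M) → ‖fc f‖ ≤ M
  tendsto_of_ptwise : ∀ (F : ℕ → ℝ → ℂ) (f : ℝ → ℂ) (M : ℝ),
    (∀ k, Measurable (F k)) → Measurable f → (∀ k x, ‖F k x‖ ≤ M) →
    (∀ x, Tendsto (fun k => F k x) atTop (𝓝 (f x))) →
    ∀ u : L2 n, Tendsto (fun k => fc (F k) u) atTop (𝓝 (fc f u))
  resolvent : ∀ z : ℂ, z.im ≠ 0 → ∀ u : L2 n,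
    ∃ v : T.domain, (v : L2 n) = fc (fun x => ((x : ℂ) - z)⁻¹) u ∧
      T v = z • (v : L2 n) + u

/-- A real-valued function of class `C₀^∞((0,+∞))`. -/
def IsCutoff (ψ : ℝ → ℝ) : Prop :=
  ContDiff ℝ (⊤ : ℕ∞) ψ ∧ HasCompactSupport ψ ∧ tsupport ψ ⊆ Set.Ioi 0

/-- A real-valued `C^∞(ℝ)` function supported in `[a,+∞)` which equals `1` on `[2a,+∞)`. -/
def IsChi (a : ℝ) (χ : ℝ → ℝ) : Prop :=
  ContDiff ℝ (⊤ : ℕ∞) χ ∧ Function.support χ ⊆ Set.Ici a ∧ ∀ x, 2 * a ≤ x → χ x = 1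

open scoped SchwartzMap LineDeriv Laplacian ComplexConjugate InnerProductSpace

/-! ### Calculus on Schwartz functions -/

/-- The `L²` class of a Schwartz function. -/
def toL2 {n : ℕ} (u : 𝓢(Euc n, ℂ)) : L2 n := SchwartzMap.toLpCLM ℂ ℂ 2 volume u

/-- The partial derivative `∂ⱼ` on Schwartz functions. -/
def pd {n : ℕ} (j : Fin n) (u : 𝓢(Euc n, ℂ)) : 𝓢(Euc n, ℂ) :=
  ∂_{(EuclideanSpace.single j (1 : ℝ) : Euc n)} u

/-- Multiplication of a Schwartz function by a real function of temperate growth. -/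
def mulS {n : ℕ} (g : Euc n → ℝ) (u : 𝓢(Euc n, ℂ)) : 𝓢(Euc n, ℂ) :=
  SchwartzMap.smulLeftCLM ℂ (fun x => (g x : ℂ)) u

section SchwartzCalculus

variable {n : ℕ}

lemma toL2_add (u v : 𝓢(Euc n, ℂ)) : toL2 (u + v) = toL2 u + toL2 v := by
  unfold toL2; exact map_add _ _ _

lemma toL2_sub (u v : 𝓢(Euc n, ℂ)) : toL2 (u - v) = toL2 u - toL2 v := by
  unfold toL2; exact map_sub _ _ _

lemma toL2_neg (u : 𝓢(Euc n, ℂ)) : toL2 (-u) = -toL2 u := by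
  unfold toL2; exact map_neg _ _

lemma toL2_smul (c : ℂ) (u : 𝓢(Euc n, ℂ)) : toL2 (c • u) = c • toL2 u := by
  unfold toL2; exact map_smul _ _ _

lemma toL2_sum {ι : Type*} (s : Finset ι) (u : ι → 𝓢(Euc n, ℂ)) :
    toL2 (∑ i ∈ s, u i) = ∑ i ∈ s, toL2 (u i) := by
  unfold toL2; exact map_sum _ _ _

lemma coeFn_toL2 (u : 𝓢(Euc n, ℂ)) : (toL2 u : Euc n → ℂ) =ᵐ[volume] u :=
  SchwartzMap.coeFn_toLp u 2 volume

lemma denseRange_toL2 : DenseRange (toL2 (n := n)) :=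
  SchwartzMap.denseRange_toLpCLM (F := ℂ) (E := Euc n) (p := 2) (μ := volume) (by norm_num)

lemma inner_toL2 (u v : 𝓢(Euc n, ℂ)) :
    inner ℂ (toL2 u) (toL2 v) = ∫ x, conj (u x) * v x := by
  have := SchwartzMap.inner_toL2_toL2_eq u v (μ := volume)
  unfold toL2
  simp only [SchwartzMap.toLpCLM_apply]
  rw [this]
  congr 1; ext x; simp [mul_comm]

lemma mulS_apply {g : Euc n → ℝ} (hg : g.HasTemperateGrowth) (u : 𝓢(Euc n, ℂ)) (x : Euc n) :
    mulS g u x = (g x : ℂ) * u x := by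
  unfold mulS
  rw [SchwartzMap.smulLeftCLM_apply_apply]
  · simp
  · exact Function.Complex.hasTemperateGrowth_ofReal.comp hg

lemma mulS_add (g : Euc n → ℝ) (u v : 𝓢(Euc n, ℂ)) : mulS g (u + v) = mulS g u + mulS g v := by
  simp [mulS]

lemma pd_add (j : Fin n) (u v : 𝓢(Euc n, ℂ)) : pd j (u + v) = pd j u + pd j v := by
  unfold pd; exact LineDeriv.lineDerivOp_add _ _ _

lemma pd_sum (j : Fin n) {ι : Type*} (s : Finset ι) (u : ι → 𝓢(Euc n, ℂ)) :
    pd j (∑ i ∈ s, u i) = ∑ i ∈ s, pd j (u i) := by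
  unfold pd; exact LineDeriv.lineDerivOp_sum _ _ _

lemma integrable_conj_mul (u v : 𝓢(Euc n, ℂ)) : Integrable (fun x => conj (u x) * v x) := by
  have h := L2.integrable_inner (𝕜 := ℂ) (toL2 u) (toL2 v)
  refine h.congr ?_
  filter_upwards [coeFn_toL2 u, coeFn_toL2 v] with x hx hy
  rw [hx, hy]; simp [mul_comm]

/-- Integration by parts. -/
lemma inner_pd_left (j : Fin n) (u v : 𝓢(Euc n, ℂ)) :
    inner ℂ (toL2 (pd j u)) (toL2 v) = -inner ℂ (toL2 u) (toL2 (pd j v)) := by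
  rw [inner_toL2, inner_toL2]
  have := SchwartzMap.integral_bilinear_lineDerivOp_right_eq_neg_left (μ := volume) u v
    ((ContinuousLinearMap.mul ℝ ℂ).comp (Complex.conjCLE : ℂ →L[ℝ] ℂ))
    (EuclideanSpace.single j (1 : ℝ) : Euc n)
  simp only [ContinuousLinearMap.comp_apply, ContinuousLinearMap.mul_apply',
    ContinuousLinearEquiv.coe_coe, Complex.conjCLE_apply] at this
  unfold pd
  rw [this, neg_neg]

lemma inner_pd_right (j : Fin n) (u v : 𝓢(Euc n, ℂ)) :
    inner ℂ (toL2 u) (toL2 (pd j v)) = -inner ℂ (toL2 (pd j u)) (toL2 v) := by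
  rw [inner_pd_left, neg_neg]

lemma inner_mulS_left {g : Euc n → ℝ} (hg : g.HasTemperateGrowth) (u v : 𝓢(Euc n, ℂ)) :
    inner ℂ (toL2 (mulS g u)) (toL2 v) = inner ℂ (toL2 u) (toL2 (mulS g v)) := by
  rw [inner_toL2, inner_toL2]
  congr 1; ext x
  rw [mulS_apply hg, mulS_apply hg]
  simp; ring

lemma inner_mulS {g : Euc n → ℝ} (hg : g.HasTemperateGrowth) (u v : 𝓢(Euc n, ℂ)) :
    inner ℂ (toL2 (mulS g u)) (toL2 v) = ∫ x, (g x : ℂ) * (conj (u x) * v x) := by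
  rw [inner_toL2]
  congr 1; ext x
  rw [mulS_apply hg]
  simp; ring

lemma mulS_mulS {g k : Euc n → ℝ} (hg : g.HasTemperateGrowth) (hk : k.HasTemperateGrowth)
    (u : 𝓢(Euc n, ℂ)) : mulS g (mulS k u) = mulS (fun x => g x * k x) u := by
  ext x
  have h : (fun x => g x * k x).HasTemperateGrowth := hg.mul hk
  rw [mulS_apply hg, mulS_apply hk, mulS_apply h]
  push_cast; ring

lemma pd_mulS {g g' : Euc n → ℝ} (hg : g.HasTemperateGrowth) (hg' : g'.HasTemperateGrowth)
    (j : Fin n) (hd : ∀ x, fderiv ℝ g x (EuclideanSpace.single j 1) = g' x) (u : 𝓢(Euc n, ℂ)) :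
    pd j (mulS g u) = mulS g (pd j u) + mulS g' u := by
  ext x
  rw [add_apply, mulS_apply hg, mulS_apply hg']
  unfold pd
  rw [SchwartzMap.lineDerivOp_apply_eq_fderiv, SchwartzMap.lineDerivOp_apply_eq_fderiv]
  have h1 : HasFDerivAt g (fderiv ℝ g x) x :=
    (hg.1.differentiable (by simp) x).hasFDerivAt
  have h2 : HasFDerivAt (fun y => (g y : ℂ)) (Complex.ofRealCLM.comp (fderiv ℝ g x)) x :=
    Complex.ofRealCLM.hasFDerivAt.comp x h1
  have h3 := h2.mul (SchwartzMap.hasFDerivAt u x)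
  have h4 : (mulS g u : Euc n → ℂ) = fun y => (g y : ℂ) * u y := by
    ext y; exact mulS_apply hg u y
  rw [h4]
  have h5 := h3.fderiv
  rw [show (fun y => (g y : ℂ) * u y) = (fun y => (g y : ℂ)) * ⇑u from rfl, h5]
  simp [hd, mul_comm]

/-- A first-order form with real weight reduces to a zeroth-order one. -/
lemma re_inner_mulS_pd {g g' : Euc n → ℝ} (hg : g.HasTemperateGrowth)
    (hg' : g'.HasTemperateGrowth) (j : Fin n)
    (hd : ∀ x, fderiv ℝ g x (EuclideanSpace.single j 1) = g' x) (u : 𝓢(Euc n, ℂ)) :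
    2 * (inner ℂ (toL2 (mulS g u)) (toL2 (pd j u))).re =
      -(inner ℂ (toL2 (mulS g' u)) (toL2 u)).re := by
  have h1 : inner ℂ (toL2 (mulS g u)) (toL2 (pd j u)) =
      -inner ℂ (toL2 (mulS g (pd j u))) (toL2 u) - inner ℂ (toL2 (mulS g' u)) (toL2 u) := by
    rw [inner_pd_right, pd_mulS hg hg' j hd, toL2_add, inner_add_left]; ring
  have h2 : (inner ℂ (toL2 (mulS g (pd j u))) (toL2 u)).re =
      (inner ℂ (toL2 (mulS g u)) (toL2 (pd j u))).re := by
    rw [inner_mulS_left hg, ← inner_conj_symm, Complex.conj_re]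
  have := congrArg Complex.re h1
  simp only [Complex.sub_re, Complex.neg_re, h2] at this
  linarith

/-- The operator `-Δ - z` on Schwartz functions. -/
def freeOp (z : ℂ) (u : 𝓢(Euc n, ℂ)) : 𝓢(Euc n, ℂ) := -(∑ k, pd k (pd k u)) - z • u

lemma lapl_eq (u : 𝓢(Euc n, ℂ)) (x : Euc n) : lapl u x = (∑ k, pd k (pd k u)) x := by
  have h1 := InnerProductSpace.laplacian_eq_iteratedFDeriv_orthonormalBasis (u : Euc n → ℂ)
    (EuclideanSpace.basisFun (Fin n) ℝ)
  have h2 := SchwartzMap.laplacian_apply u x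
  have h3 := SchwartzMap.laplacian_eq_sum (EuclideanSpace.basisFun (Fin n) ℝ) u
  rw [h1, h3] at h2
  simp only [EuclideanSpace.basisFun_apply] at h2
  exact h2.symm

/-- For non-real `z`, `-Δ - z` maps the Schwartz space onto itself: its inverse is the Fourier
multiplier with symbol `(4π²|ξ|² - z)⁻¹`. -/
lemma freeOp_surj {z : ℂ} (hz : z.im ≠ 0) (f : 𝓢(Euc n, ℂ)) :
    ∃ u, freeOp z u = f := by
  -- Temperate growth of the symbol: rationalise, and write `|q - z|²` as `(Im z)² (1 + y²)`.
  let q : Euc n → ℝ := fun x => (2 * π) ^ 2 * ‖x‖ ^ 2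
  have hN : (fun x : Euc n => ‖x‖ ^ 2).HasTemperateGrowth :=
    Function.hasTemperateGrowth_norm_sq _
  have hq : q.HasTemperateGrowth := (Function.HasTemperateGrowth.const _).mul hN
  have hqC : (fun x => (q x : ℂ)).HasTemperateGrowth :=
    Function.Complex.hasTemperateGrowth_ofReal.comp hq
  let y : Euc n → ℝ := fun x => (q x - z.re) * z.im⁻¹
  have hy : y.HasTemperateGrowth :=
    (hq.sub (Function.HasTemperateGrowth.const _)).mul (Function.HasTemperateGrowth.const _)
  let r : Euc n → ℝ := fun x => (1 + ‖y x‖ ^ 2) ^ (-1 : ℝ)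
  have hr : r.HasTemperateGrowth :=
    (Function.hasTemperateGrowth_one_add_norm_sq_rpow ℝ (-1)).comp hy
  have hrC : (fun x => (r x : ℂ)).HasTemperateGrowth :=
    Function.Complex.hasTemperateGrowth_ofReal.comp hr
  let m : Euc n → ℂ := fun x => ((q x : ℂ) - conj z) * (((z.im : ℂ) ^ 2)⁻¹ * (r x : ℂ))
  have hm : m.HasTemperateGrowth :=
    (hqC.sub (Function.HasTemperateGrowth.const _)).mul
      ((Function.HasTemperateGrowth.const _).mul hrC)
  have hmq : ∀ x, ((q x : ℂ) - z) * m x = 1 := by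
    intro x
    have h1 : r x = (1 + (y x) ^ 2)⁻¹ := by
      simp only [r]; rw [Real.rpow_neg_one]; simp
    have h2 : ((q x : ℂ) - z) * ((q x : ℂ) - conj z) = ((z.im ^ 2 * (1 + (y x) ^ 2) : ℝ) : ℂ) := by
      have : z.im ^ 2 * (1 + (y x) ^ 2) = (q x - z.re) ^ 2 + z.im ^ 2 := by
        simp only [y]; field_simp; ring
      rw [this]
      apply Complex.ext <;> simp [-Complex.ofReal_pow] <;> ring
    have h3 : (1 + (y x) ^ 2) ≠ 0 := by positivity
    simp only [m]
    rw [← mul_assoc, h2, h1, ← Complex.ofReal_pow, ← Complex.ofReal_inv, ← Complex.ofReal_mul,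
      ← Complex.ofReal_mul]
    rw [← Complex.ofReal_one]
    congr 1
    field_simp
  refine ⟨SchwartzMap.fourierMultiplierCLM ℂ m f, ?_⟩
  set u := SchwartzMap.fourierMultiplierCLM ℂ m f with hu
  have hlap : -(∑ k, pd k (pd k u)) = SchwartzMap.fourierMultiplierCLM ℂ (fun x => (q x : ℂ)) u := by
    have h3 := SchwartzMap.laplacian_eq_sum (EuclideanSpace.basisFun (Fin n) ℝ) u
    simp only [EuclideanSpace.basisFun_apply] at h3
    have h4 := SchwartzMap.laplacian_eq_fourierMultiplierCLM u
    have h5 : ∑ k, pd k (pd k u) = Δ u := h3.symm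
    have h6 : SchwartzMap.fourierMultiplierCLM ℂ q u =
        (2 * π) ^ 2 • SchwartzMap.fourierMultiplierCLM ℂ (fun x : Euc n => ‖x‖ ^ 2) u := by
      have := SchwartzMap.fourierMultiplierCLM_smul (F := ℂ) hN ((2 * π) ^ 2)
      have h7 := DFunLike.congr_fun this u
      exact h7
    rw [h5, h4, neg_smul, neg_neg]
    have h8 := SchwartzMap.fourierMultiplierCLM_ofReal (F := ℂ) ℂ hq u
    rw [h6] at h8
    exact h8.symm
  have hz' : z • u = SchwartzMap.fourierMultiplierCLM ℂ (fun _ : Euc n => z) u := by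
    rw [SchwartzMap.fourierMultiplierCLM_const]; simp
  unfold freeOp
  rw [hlap, hz', hu, SchwartzMap.fourierMultiplierCLM_fourierMultiplierCLM_apply hqC hm,
    SchwartzMap.fourierMultiplierCLM_fourierMultiplierCLM_apply
      (Function.HasTemperateGrowth.const _) hm]
  simp only [SchwartzMap.fourierMultiplierCLM_apply]
  rw [sub_eq_add_neg, ← FourierTransform.fourierInv_neg, ← FourierTransform.fourierInv_add,
    ← sub_eq_add_neg, ← sub_apply, ← SchwartzMap.smulLeftCLM_sub
    (hqC.mul hm) ((Function.HasTemperateGrowth.const _).mul hm)]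
  have : (fun x => (q x : ℂ)) * m - (fun _ : Euc n => z) * m = fun _ => 1 := by
    ext x
    have := hmq x
    simp only [Pi.sub_apply, Pi.mul_apply]
    rw [← this]; ring
  rw [this, SchwartzMap.smulLeftCLM_const]
  simp

end SchwartzCalculus

/-! ### Weights and the Morawetz multiplier -/

/-- The weight `(1 + |x|²)^r`. -/
def wt {n : ℕ} (r : ℝ) (x : Euc n) : ℝ := (1 + ‖x‖ ^ 2) ^ r

section Weights

variable {n : ℕ}

lemma wt_pos (r : ℝ) (x : Euc n) : 0 < wt r x := by unfold wt; positivity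

lemma wt_succ (r : ℝ) (x : Euc n) : wt (r + 1) x = (1 + ‖x‖ ^ 2) * wt r x := by
  unfold wt
  rw [Real.rpow_add_one (by positivity), mul_comm]

lemma wt_mul (r s : ℝ) (x : Euc n) : wt r x * wt s x = wt (r + s) x := by
  unfold wt
  rw [Real.rpow_add (by positivity)]

lemma wt_zero (x : Euc n) : wt 0 x = 1 := by simp [wt]

lemma wt_le_wt {r s : ℝ} (h : r ≤ s) (x : Euc n) : wt r x ≤ wt s x :=
  Real.rpow_le_rpow_of_exponent_le (by nlinarith [sq_nonneg ‖x‖]) h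

lemma wt_le_one {r : ℝ} (h : r ≤ 0) (x : Euc n) : wt r x ≤ 1 := wt_zero x ▸ wt_le_wt h x

lemma abs_coord_mul_wt_le (j : Fin n) (r : ℝ) (x : Euc n) : |x j| * wt r x ≤ wt (r + 1 / 2) x := by
  have h1 : |x j| ≤ ‖x‖ := PiLp.norm_apply_le x j
  have h2 : |x j| ≤ wt (1 / 2) x := by
    unfold wt
    rw [← Real.sqrt_eq_rpow]
    exact h1.trans (Real.le_sqrt_of_sq_le (by linarith))
  calc |x j| * wt r x ≤ wt (1 / 2) x * wt r x := by gcongr; exact (wt_pos r x).le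
    _ = _ := by rw [wt_mul, add_comm]

lemma wt_tg (r : ℝ) : (wt r : Euc n → ℝ).HasTemperateGrowth :=
  Function.hasTemperateGrowth_one_add_norm_sq_rpow (Euc n) r

lemma coord_tg (j : Fin n) : (fun x : Euc n => x j).HasTemperateGrowth :=
  (EuclideanSpace.proj (𝕜 := ℝ) j : Euc n →L[ℝ] ℝ).hasTemperateGrowth

lemma cw_tg (j : Fin n) (r : ℝ) : (fun x : Euc n => x j * wt r x).HasTemperateGrowth :=
  (coord_tg j).mul (wt_tg r)

lemma hasFDerivAt_wt (r : ℝ) (x : Euc n) :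
    HasFDerivAt (wt r) ((r * (1 + ‖x‖ ^ 2) ^ (r - 1)) • ((2 : ℝ) • innerSL ℝ x)) x := by
  have h1 : HasFDerivAt (fun y : Euc n => 1 + ‖y‖ ^ 2) ((2 : ℝ) • innerSL ℝ x) x := by
    have := (hasStrictFDerivAt_norm_sq x).hasFDerivAt.const_add 1
    rwa [← Nat.cast_smul_eq_nsmul ℝ, Nat.cast_ofNat] at this
  exact h1.rpow_const (Or.inl (by positivity))

lemma fderiv_wt (r : ℝ) (k : Fin n) (x : Euc n) :
    fderiv ℝ (wt r) x (EuclideanSpace.single k 1) = 2 * r * (x k * wt (r - 1) x) := by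
  rw [(hasFDerivAt_wt r x).fderiv]
  simp [wt, EuclideanSpace.inner_single_right]
  ring

lemma fderiv_cw (r : ℝ) (j k : Fin n) (x : Euc n) :
    fderiv ℝ (fun x : Euc n => x j * wt r x) x (EuclideanSpace.single k 1) =
      (if j = k then 1 else 0) * wt r x + 2 * r * (x j * x k * wt (r - 1) x) := by
  have h1 : HasFDerivAt (fun x : Euc n => x j) (EuclideanSpace.proj (𝕜 := ℝ) j) x :=
    (EuclideanSpace.proj (𝕜 := ℝ) j : Euc n →L[ℝ] ℝ).hasFDerivAt
  have h2 := h1.mul (hasFDerivAt_wt r x)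
  have h3 := h2.fderiv
  rw [show (fun x : Euc n => x j * wt r x) = (fun x : Euc n => x j) * wt r from rfl, h3]
  simp [wt, EuclideanSpace.inner_single_right]
  ring

lemma norm_sq_eq_sum (x : Euc n) : ‖x‖ ^ 2 = ∑ j, x j ^ 2 := by
  rw [EuclideanSpace.norm_sq_eq]; simp

end Weights

section Forms

variable {n : ℕ}

lemma integrable_mul_re {g : Euc n → ℝ} (hg : g.HasTemperateGrowth) (u v : 𝓢(Euc n, ℂ)) :
    Integrable (fun x => g x * (conj (u x) * v x).re) := by
  have := (integrable_conj_mul (mulS g u) v).re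
  refine this.congr (Eventually.of_forall fun x => ?_)
  simp only [mulS_apply hg]
  simp
  ring

lemma re_inner_mulS {g : Euc n → ℝ} (hg : g.HasTemperateGrowth) (u v : 𝓢(Euc n, ℂ)) :
    (inner ℂ (toL2 (mulS g u)) (toL2 v)).re = ∫ x, g x * (conj (u x) * v x).re := by
  rw [inner_toL2]
  have := integral_re (integrable_conj_mul (mulS g u) v)
  simp only [RCLike.re_to_complex] at this
  rw [← this]
  congr 1; ext x
  rw [mulS_apply hg]
  simp
  ring

lemma conj_mul_self_re (c : ℂ) : (conj c * c).re = ‖c‖ ^ 2 := by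
  rw [← Complex.normSq_eq_norm_sq, Complex.normSq_apply]; simp

lemma norm_mulS_sq {g : Euc n → ℝ} (hg : g.HasTemperateGrowth) (u : 𝓢(Euc n, ℂ)) :
    ‖toL2 (mulS g u)‖ ^ 2 = ∫ x, g x ^ 2 * ‖u x‖ ^ 2 := by
  rw [← inner_self_eq_norm_sq (𝕜 := ℂ)]
  simp only [RCLike.re_to_complex]
  rw [re_inner_mulS hg]
  congr 1; ext x
  rw [mulS_apply hg, ← conj_mul_self_re]
  simp
  ring

lemma norm_toL2_mono {u v : 𝓢(Euc n, ℂ)} {c : ℝ} (h : ∀ x, ‖u x‖ ≤ c * ‖v x‖) :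
    ‖toL2 u‖ ≤ c * ‖toL2 v‖ := by
  apply Lp.norm_le_mul_norm_of_ae_le_mul
  filter_upwards [coeFn_toL2 u, coeFn_toL2 v] with x hx hy
  rw [hx, hy]; exact h x

/-- Cauchy–Schwarz for the weighted pairing with weights `(1+|x|²)^{∓3/4}`. -/
lemma norm_inner_le_wt (u f : 𝓢(Euc n, ℂ)) :
    ‖inner ℂ (toL2 u) (toL2 f)‖ ≤
      ‖toL2 (mulS (wt (-3 / 4)) u)‖ * ‖toL2 (mulS (wt (3 / 4)) f)‖ := by
  have : inner ℂ (toL2 u) (toL2 f) =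
      inner ℂ (toL2 (mulS (wt (-3 / 4)) u)) (toL2 (mulS (wt (3 / 4)) f)) := by
    rw [inner_mulS_left (wt_tg _), mulS_mulS (wt_tg _) (wt_tg _)]
    congr 2
    ext x
    have h : (fun x : Euc n => wt (-3 / 4) x * wt (3 / 4) x) = fun _ => 1 := by
      ext y; rw [wt_mul]; norm_num [wt_zero]
    rw [h, mulS_apply (Function.HasTemperateGrowth.const _)]
    simp
  rw [this]
  exact norm_inner_le_norm _ _

end Forms

section Multiplier

variable {n : ℕ}

/-- Half the divergence of the vector field `x / ⟨x⟩`. -/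
def halfDiv (x : Euc n) : ℝ := (1 / 2) * (((n : ℝ) - 1) * wt (-1 / 2) x + wt (-3 / 2) x)

/-- The derivative `∂ₖ (xⱼ / ⟨x⟩)`. -/
def hess (k j : Fin n) (x : Euc n) : ℝ :=
  (if j = k then 1 else 0) * wt (-1 / 2) x + (-1) * (x j * x k * wt (-3 / 2) x)

/-- The derivative `∂ₖ` of `halfDiv`. -/
def gradHalfDiv (k : Fin n) (x : Euc n) : ℝ :=
  (-((n : ℝ) - 1) / 2) * (x k * wt (-3 / 2) x) + (-3 / 2) * (x k * wt (-5 / 2) x)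

/-- The derivative `∂ₖ` of `gradHalfDiv k`. -/
def grad2HalfDiv (k : Fin n) (x : Euc n) : ℝ :=
  (-((n : ℝ) - 1) / 2) * (wt (-3 / 2) x - 3 * (x k * x k * wt (-5 / 2) x)) +
    (-3 / 2) * (wt (-5 / 2) x - 5 * (x k * x k * wt (-7 / 2) x))

lemma const_mul_tg {g : Euc n → ℝ} (c : ℝ) (hg : g.HasTemperateGrowth) :
    (fun x => c * g x).HasTemperateGrowth := (Function.HasTemperateGrowth.const c).mul hg

lemma halfDiv_tg : (halfDiv (n := n)).HasTemperateGrowth :=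
  const_mul_tg _ ((const_mul_tg _ (wt_tg _)).add (wt_tg _))

lemma hess_tg (k j : Fin n) : (hess k j).HasTemperateGrowth :=
  (const_mul_tg _ (wt_tg _)).add
    (const_mul_tg _ (((coord_tg j).mul (coord_tg k)).mul (wt_tg _)))

lemma gradHalfDiv_tg (k : Fin n) : (gradHalfDiv k).HasTemperateGrowth :=
  (const_mul_tg _ (cw_tg k _)).add (const_mul_tg _ (cw_tg k _))

lemma grad2HalfDiv_tg (k : Fin n) : (grad2HalfDiv k).HasTemperateGrowth :=
  (const_mul_tg _ ((wt_tg _).sub (const_mul_tg _ (((coord_tg k).mul (coord_tg k)).mul (wt_tg _))))).add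
    (const_mul_tg _ ((wt_tg _).sub
      (const_mul_tg _ (((coord_tg k).mul (coord_tg k)).mul (wt_tg _)))))

lemma tg_diff {g : Euc n → ℝ} (hg : g.HasTemperateGrowth) : Differentiable ℝ g :=
  hg.1.differentiable (by simp)

lemma fderiv_X (k j : Fin n) (x : Euc n) :
    fderiv ℝ (fun x : Euc n => x j * wt (-1 / 2) x) x (EuclideanSpace.single k 1) =
      hess k j x := by
  rw [fderiv_cw, hess]; norm_num

lemma fderiv_halfDiv (k : Fin n) (x : Euc n) :
    fderiv ℝ (halfDiv (n := n)) x (EuclideanSpace.single k 1) = gradHalfDiv k x := by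
  have h1 := (tg_diff (wt_tg (n := n) (-1 / 2)) x).hasFDerivAt
  have h2 := (tg_diff (wt_tg (n := n) (-3 / 2)) x).hasFDerivAt
  have h3 := (((h1.const_mul ((n : ℝ) - 1)).add h2).const_mul (1 / 2)).fderiv
  refine (congrArg (fun L : Euc n →L[ℝ] ℝ => L (EuclideanSpace.single k 1)) h3).trans ?_
  simp only [smul_apply, add_apply, fderiv_wt, smul_eq_mul,
    gradHalfDiv]
  norm_num
  ring

lemma fderiv_gradHalfDiv (k : Fin n) (x : Euc n) :
    fderiv ℝ (gradHalfDiv k) x (EuclideanSpace.single k 1) = grad2HalfDiv k x := by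
  have h1 := (tg_diff (cw_tg (n := n) k (-3 / 2)) x).hasFDerivAt
  have h2 := (tg_diff (cw_tg (n := n) k (-5 / 2)) x).hasFDerivAt
  have h3 := ((h1.const_mul (-((n : ℝ) - 1) / 2)).add (h2.const_mul (-3 / 2))).fderiv
  rw [show gradHalfDiv k = (fun y => (-((n : ℝ) - 1) / 2) * (y k * wt (-3 / 2) y)) +
    (fun y => (-3 / 2) * (y k * wt (-5 / 2) y)) from rfl, h3]
  simp only [smul_apply, add_apply, fderiv_cw, smul_eq_mul,
    grad2HalfDiv]
  norm_num
  ring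

lemma sum_hess (x : Euc n) : ∑ j, hess j j x = 2 * halfDiv x := by
  have h := wt_succ (-3 / 2) x
  norm_num at h
  simp only [hess, halfDiv, if_true, Finset.sum_add_distrib, ← Finset.mul_sum, ← Finset.sum_mul,
    Finset.sum_const, Finset.card_univ, Fintype.card_fin]
  have h2 := norm_sq_eq_sum x
  simp only [sq (x _)] at h2
  rw [← h2]
  norm_num [h]
  ring

/-- The function `halfDiv` is superharmonic in dimension at least four, so that the zeroth-order
term of the Morawetz commutator has the good sign. -/
lemma sum_grad2_nonpos (hn : 4 ≤ n) (x : Euc n) : ∑ k, grad2HalfDiv k x ≤ 0 := by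
  have e1 : wt (-5 / 2) x = (1 + ‖x‖ ^ 2) * wt (-7 / 2) x := by
    rw [← wt_succ]; norm_num
  have e2 : wt (-3 / 2) x = (1 + ‖x‖ ^ 2) * wt (-5 / 2) x := by
    rw [← wt_succ]; norm_num
  have h2 := norm_sq_eq_sum x
  simp only [sq (x _)] at h2
  have key : ∑ k, grad2HalfDiv k x =
      (-((n : ℝ) - 1) / 2) * (n * wt (-3 / 2) x - 3 * (‖x‖ ^ 2 * wt (-5 / 2) x)) +
    (-3 / 2) * (n * wt (-5 / 2) x - 5 * (‖x‖ ^ 2 * wt (-7 / 2) x)) := by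
    simp only [grad2HalfDiv, Finset.sum_add_distrib, ← Finset.mul_sum, ← Finset.sum_mul,
      Finset.sum_const, Finset.card_univ, Fintype.card_fin, Finset.sum_sub_distrib]
    rw [← h2]
    simp
  have hp := wt_pos (-7 / 2) x
  have hn' : (4 : ℝ) ≤ n := by exact_mod_cast hn
  have hq := sq_nonneg ‖x‖
  set q := ‖x‖ ^ 2
  set s := wt (-7 / 2) x
  set m : ℝ := (n : ℝ)
  rw [key, e2, e1]
  have : (-(m - 1) / 2) * (m * ((1 + q) * ((1 + q) * s)) - 3 * (q * ((1 + q) * s))) +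
      (-3 / 2) * (m * ((1 + q) * s) - 5 * (q * s)) =
      -(s / 2) * ((m - 1) * (1 + q) * (m + (m - 3) * q) + 3 * (m + (m - 5) * q)) := by ring
  rw [this]
  have h1 : 0 ≤ (m - 1) * (1 + q) * (m + (m - 3) * q) + 3 * (m + (m - 5) * q) := by
    have a1 : (3 : ℝ) * 1 * (4 + q) ≤ (m - 1) * (1 + q) * (m + (m - 3) * q) := by
      have b1 : (3 : ℝ) * 1 ≤ (m - 1) * (1 + q) :=
        mul_le_mul (by linarith) (by linarith) (by norm_num) (by linarith)
      exact mul_le_mul b1 (by nlinarith) (by linarith) (by linarith)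
    nlinarith
  have : 0 ≤ (s / 2) * ((m - 1) * (1 + q) * (m + (m - 3) * q) + 3 * (m + (m - 5) * q)) := by
    positivity
  linarith

/-- The Hessian of `⟨x⟩` is bounded below by `⟨x⟩⁻³`. -/
lemma hess_lower (x : Euc n) (c : Fin n → ℂ) :
    ∑ j, wt (-3 / 2) x * (conj (c j) * c j).re ≤
      ∑ k, ∑ j, hess k j x * (conj (c j) * c k).re := by
  have e1 : wt (-1 / 2) x = (1 + ‖x‖ ^ 2) * wt (-3 / 2) x := by
    rw [← wt_succ]; norm_num
  have hp := wt_pos (-3 / 2) x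
  have h2 := norm_sq_eq_sum x
  set s : ℂ := ∑ j, (x j : ℂ) * c j with hs
  have hexp : ∑ k, ∑ j, (x j * x k) * (conj (c j) * c k).re = ‖s‖ ^ 2 := by
    rw [← conj_mul_self_re, hs, map_sum, Finset.sum_mul_sum, Complex.re_sum, Finset.sum_comm]
    refine Finset.sum_congr rfl fun k _ => ?_
    rw [Complex.re_sum]
    refine Finset.sum_congr rfl fun j _ => ?_
    simp
    ring
  have hcs : ‖s‖ ^ 2 ≤ ‖x‖ ^ 2 * ∑ j, ‖c j‖ ^ 2 := by
    have : ‖s‖ ≤ ∑ j, |x j| * ‖c j‖ := by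
      refine (norm_sum_le _ _).trans (le_of_eq ?_)
      simp
    calc ‖s‖ ^ 2 ≤ (∑ j, |x j| * ‖c j‖) ^ 2 := by gcongr
      _ ≤ (∑ j, |x j| ^ 2) * ∑ j, ‖c j‖ ^ 2 := Finset.sum_mul_sq_le_sq_mul_sq _ _ _
      _ = _ := by rw [h2]; simp
  have hR : ∑ k, ∑ j, hess k j x * (conj (c j) * c k).re =
      wt (-1 / 2) x * ∑ j, ‖c j‖ ^ 2 - wt (-3 / 2) x * ‖s‖ ^ 2 := by
    rw [← hexp, Finset.mul_sum, Finset.mul_sum, ← Finset.sum_sub_distrib]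
    refine Finset.sum_congr rfl fun k _ => ?_
    rw [Finset.mul_sum]
    have : wt (-1 / 2) x * ‖c k‖ ^ 2 =
        ∑ j, (if j = k then wt (-1 / 2) x * (conj (c j) * c k).re else 0) := by
      simp only [Finset.sum_ite_eq', Finset.mem_univ, if_true, conj_mul_self_re]
    rw [this, ← Finset.sum_sub_distrib]
    refine Finset.sum_congr rfl fun j _ => ?_
    unfold hess
    split_ifs <;> ring
  rw [hR]
  simp only [conj_mul_self_re]
  rw [← Finset.mul_sum, e1]
  nlinarith

/-- The skew-adjoint Morawetz multiplier `x/⟨x⟩ · ∇ + ½ div (x/⟨x⟩)`. -/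
def morawetz (u : 𝓢(Euc n, ℂ)) : 𝓢(Euc n, ℂ) :=
  ∑ j, mulS (fun x => x j * wt (-1 / 2) x) (pd j u) + mulS halfDiv u

/-- Skew-adjointness: the term `½ div` compensates the divergence produced by integrating
`x/⟨x⟩ · ∇` by parts. -/
lemma morawetz_skew (u v : 𝓢(Euc n, ℂ)) :
    inner ℂ (toL2 (morawetz u)) (toL2 v) = -inner ℂ (toL2 u) (toL2 (morawetz v)) := by
  have hsum : ∑ j, inner ℂ (toL2 u) (toL2 (mulS (hess j j) v)) =
      2 * inner ℂ (toL2 u) (toL2 (mulS halfDiv v)) := by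
    rw [← inner_sum, ← toL2_sum]
    have : ∑ j, mulS (hess j j) v = (2 : ℂ) • mulS halfDiv v := by
      ext x
      rw [sum_apply]
      simp only [mulS_apply (hess_tg _ _), smul_apply, mulS_apply halfDiv_tg]
      rw [← Finset.sum_mul, ← Complex.ofReal_sum, sum_hess]
      simp; ring
    rw [this, toL2_smul, inner_smul_right]
  have h1 : ∀ j, inner ℂ (toL2 (mulS (fun x => x j * wt (-1 / 2) x) (pd j u))) (toL2 v) =
      -inner ℂ (toL2 u) (toL2 (mulS (fun x => x j * wt (-1 / 2) x) (pd j v))) -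
        inner ℂ (toL2 u) (toL2 (mulS (hess j j) v)) := by
    intro j
    rw [inner_mulS_left (cw_tg _ _), inner_pd_left,
      pd_mulS (cw_tg _ _) (hess_tg j j) j (fderiv_X j j), toL2_add, inner_add_right]
    ring
  unfold morawetz
  rw [toL2_add, toL2_add, toL2_sum, toL2_sum, inner_add_left, inner_add_right, sum_inner,
    inner_sum, Finset.sum_congr rfl fun j _ => h1 j, Finset.sum_sub_distrib, hsum,
    inner_mulS_left halfDiv_tg, Finset.sum_neg_distrib]
  ring

lemma morawetz_re_zero (u : 𝓢(Euc n, ℂ)) : (inner ℂ (toL2 (morawetz u)) (toL2 u)).re = 0 := by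
  have h1 := congrArg Complex.re (morawetz_skew u u)
  rw [← inner_conj_symm (toL2 u), Complex.neg_re, Complex.conj_re] at h1
  linarith

lemma pd_comm (j k : Fin n) (u : 𝓢(Euc n, ℂ)) : pd j (pd k u) = pd k (pd j u) := by
  ext x
  have hs : IsSymmSndFDerivAt ℝ (u : Euc n → ℂ) x :=
    (u.smooth 2).contDiffAt.isSymmSndFDerivAt (by simp)
  have key : ∀ a b : Euc n, (∂_{a} (∂_{b} u)) x = fderiv ℝ (fderiv ℝ u) x a b := by
    intro a b
    rw [SchwartzMap.lineDerivOp_apply_eq_fderiv]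
    have : ((∂_{b} u : 𝓢(Euc n, ℂ)) : Euc n → ℂ) = fun y => fderiv ℝ u y b := by
      ext y; rw [SchwartzMap.lineDerivOp_apply_eq_fderiv]
    rw [this, fderiv_clm_apply]
    · simp
    · exact ((u.smooth 2).fderiv_right (m := 1) (by norm_num)).differentiable (by simp) x
    · fun_prop
  unfold pd
  rw [key, key, hs.eq]

/-- The commutator of `∂ₖ` with the Morawetz multiplier. -/
lemma pd_morawetz (k : Fin n) (u : 𝓢(Euc n, ℂ)) :
    pd k (morawetz u) = morawetz (pd k u) + (∑ j, mulS (hess k j) (pd j u) +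
      mulS (gradHalfDiv k) u) := by
  unfold morawetz
  rw [pd_add, pd_sum, pd_mulS halfDiv_tg (gradHalfDiv_tg k) k (fderiv_halfDiv k)]
  simp only [pd_mulS (cw_tg _ _) (hess_tg k _) k (fderiv_X k _), Finset.sum_add_distrib,
    pd_comm k]
  abel

/-- The positive commutator estimate `Re ⟨Y u, -Δ u⟩ ≥ ∫ ⟨x⟩⁻³ |∇u|²`. -/
lemma morawetz_pos (hn : 4 ≤ n) (u : 𝓢(Euc n, ℂ)) :
    ∑ j, ‖toL2 (mulS (wt (-3 / 4)) (pd j u))‖ ^ 2 ≤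
      (inner ℂ (toL2 (morawetz u)) (toL2 (-∑ k, pd k (pd k u)))).re := by
  have h1 : inner ℂ (toL2 (morawetz u)) (toL2 (-∑ k, pd k (pd k u))) =
      ∑ k, inner ℂ (toL2 (pd k (morawetz u))) (toL2 (pd k u)) := by
    rw [toL2_neg, inner_neg_right, toL2_sum, inner_sum, ← Finset.sum_neg_distrib]
    refine Finset.sum_congr rfl fun k _ => ?_
    rw [inner_pd_right, neg_neg]
  have h2 : (inner ℂ (toL2 (morawetz u)) (toL2 (-∑ k, pd k (pd k u)))).re =
      ∑ k, (∑ j, (inner ℂ (toL2 (mulS (hess k j) (pd j u))) (toL2 (pd k u))).re) +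
      ∑ k, (inner ℂ (toL2 (mulS (gradHalfDiv k) u)) (toL2 (pd k u))).re := by
    rw [h1, Complex.re_sum, ← Finset.sum_add_distrib]
    refine Finset.sum_congr rfl fun k _ => ?_
    rw [pd_morawetz, toL2_add, inner_add_left, Complex.add_re, morawetz_re_zero, zero_add,
      toL2_add, inner_add_left, Complex.add_re, toL2_sum, sum_inner, Complex.re_sum]
  have h3 : 0 ≤ ∑ k, (inner ℂ (toL2 (mulS (gradHalfDiv k) u)) (toL2 (pd k u))).re := by
    have : ∀ k, (inner ℂ (toL2 (mulS (gradHalfDiv k) u)) (toL2 (pd k u))).re =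
        ∫ x, (-1 / 2) * (grad2HalfDiv k x * (conj (u x) * u x).re) := by
      intro k
      have h := re_inner_mulS_pd (gradHalfDiv_tg k) (grad2HalfDiv_tg k) k (fderiv_gradHalfDiv k) u
      rw [re_inner_mulS (grad2HalfDiv_tg k)] at h
      rw [integral_const_mul]
      linarith
    rw [Finset.sum_congr rfl fun k _ => this k, ← integral_finsetSum]
    · apply integral_nonneg
      intro x
      simp only [Pi.zero_apply]
      rw [← Finset.mul_sum, ← Finset.sum_mul, conj_mul_self_re]
      have := sum_grad2_nonpos hn x
      have h5 := sq_nonneg ‖u x‖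
      nlinarith
    · intro k _
      exact (integrable_mul_re (grad2HalfDiv_tg k) u u).const_mul _
  have h4 : ∑ j, ‖toL2 (mulS (wt (-3 / 4)) (pd j u))‖ ^ 2 ≤
      ∑ k, (∑ j, (inner ℂ (toL2 (mulS (hess k j) (pd j u))) (toL2 (pd k u))).re) := by
    have : ∀ j, ‖toL2 (mulS (wt (-3 / 4)) (pd j u))‖ ^ 2 =
        ∫ x, wt (-3 / 2) x * (conj (pd j u x) * pd j u x).re := by
      intro j
      rw [norm_mulS_sq (wt_tg _)]
      congr 1; ext x
      rw [conj_mul_self_re, sq (wt _ x), wt_mul]; norm_num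
    simp only [this, re_inner_mulS (hess_tg _ _)]
    rw [← integral_finsetSum _ fun j _ => integrable_mul_re (wt_tg _) _ _]
    have h6 : ∀ k, ∑ j, ∫ x, hess k j x * (conj (pd j u x) * pd k u x).re =
        ∫ x, ∑ j, hess k j x * (conj (pd j u x) * pd k u x).re := by
      intro k
      rw [← integral_finsetSum _ fun j _ => integrable_mul_re (hess_tg k j) _ _]
    simp only [h6]
    rw [← integral_finsetSum _ fun k _ => integrable_finsetSum _ fun j _ =>
      integrable_mul_re (hess_tg k j) _ _]
    apply integral_mono
    · exact integrable_finsetSum _ fun j _ => integrable_mul_re (wt_tg _) _ _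
    · exact integrable_finsetSum _ fun k _ => integrable_finsetSum _ fun j _ =>
        integrable_mul_re (hess_tg k j) _ _
    · intro x
      exact hess_lower x fun j => pd j u x
  rw [h2]
  linarith

end Multiplier

/-! ### Limiting absorption on Schwartz functions -/

section LimitingAbsorption

variable {n : ℕ}

lemma mulS_sum (g : Euc n → ℝ) {ι : Type*} (s : Finset ι) (u : ι → 𝓢(Euc n, ℂ)) :
    mulS g (∑ i ∈ s, u i) = ∑ i ∈ s, mulS g (u i) := by
  unfold mulS; exact map_sum _ _ _

lemma mulS_wt_zero (u : 𝓢(Euc n, ℂ)) : mulS (wt 0) u = u := by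
  ext x; rw [mulS_apply (wt_tg _), wt_zero]; simp

lemma abs_halfDiv_le (hn : 4 ≤ n) (x : Euc n) : |halfDiv x| ≤ n := by
  have hn' : (4 : ℝ) ≤ n := by exact_mod_cast hn
  have h1 := wt_pos (-1 / 2) x
  have h2 := wt_pos (-3 / 2) x
  have h3 := wt_le_one (r := -1 / 2) (by norm_num) x
  have h4 := wt_le_one (r := -3 / 2) (by norm_num) x
  unfold halfDiv
  rw [abs_of_nonneg (mul_nonneg (by norm_num) (add_nonneg (mul_nonneg (by linarith) h1.le) h2.le))]
  nlinarith

lemma norm_mulS_morawetz_le (hn : 4 ≤ n) {w : Euc n → ℝ} (hw : w.HasTemperateGrowth)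
    (u : 𝓢(Euc n, ℂ)) :
    ‖toL2 (mulS w (morawetz u))‖ ≤
      ∑ j, ‖toL2 (mulS w (pd j u))‖ + n * ‖toL2 (mulS w u)‖ := by
  unfold morawetz
  rw [mulS_add, toL2_add, mulS_sum, toL2_sum]
  refine (norm_add_le _ _).trans (add_le_add ((norm_sum_le _ _).trans ?_) ?_)
  · refine Finset.sum_le_sum fun j _ => ?_
    rw [← one_mul ‖toL2 (mulS w (pd j u))‖]
    refine norm_toL2_mono fun x => ?_
    rw [mulS_apply hw, mulS_apply hw, mulS_apply (cw_tg _ _)]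
    have := abs_coord_mul_wt_le j (-1 / 2) x
    rw [show (-1 / 2 + 1 / 2 : ℝ) = 0 by norm_num, wt_zero] at this
    simp only [norm_mul, Complex.norm_real, Real.norm_eq_abs, one_mul, abs_of_pos (wt_pos _ x)]
    have h1 : 0 ≤ |w x| * ‖pd j u x‖ := by positivity
    nlinarith
  · refine norm_toL2_mono fun x => ?_
    rw [mulS_apply hw, mulS_apply hw, mulS_apply halfDiv_tg]
    simp only [norm_mul, Complex.norm_real, Real.norm_eq_abs]
    have := abs_halfDiv_le hn x
    have h1 : 0 ≤ |w x| * ‖u x‖ := by positivity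
    nlinarith

/-- The weak form of `-Δ - z`. -/
lemma inner_freeOp (z : ℂ) (v u : 𝓢(Euc n, ℂ)) :
    inner ℂ (toL2 v) (toL2 (freeOp z u)) =
      ∑ k, inner ℂ (toL2 (pd k v)) (toL2 (pd k u)) - z * inner ℂ (toL2 v) (toL2 u) := by
  unfold freeOp
  rw [toL2_sub, inner_sub_right, toL2_smul, inner_smul_right, toL2_neg, inner_neg_right, toL2_sum,
    inner_sum, ← Finset.sum_neg_distrib]
  congr 1
  refine Finset.sum_congr rfl fun k _ => ?_
  rw [inner_pd_right, neg_neg]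

lemma inner_toL2_self (u : 𝓢(Euc n, ℂ)) :
    inner ℂ (toL2 u) (toL2 u) = ((‖toL2 u‖ ^ 2 : ℝ) : ℂ) := by
  rw [inner_self_eq_norm_sq_to_K]; push_cast; rfl

/-- The commutator bound: the weighted gradient is controlled through the Morawetz multiplier. -/
lemma grad_le (hn : 4 ≤ n) (z : ℂ) (u : 𝓢(Euc n, ℂ)) :
    ∑ j, ‖toL2 (mulS (wt (-3 / 4)) (pd j u))‖ ^ 2 ≤
      (∑ j, ‖toL2 (mulS (wt (-3 / 4)) (pd j u))‖ + n * ‖toL2 (mulS (wt (-3 / 4)) u)‖) *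
        ‖toL2 (mulS (wt (3 / 4)) (freeOp z u))‖ +
      |z.im| * ((∑ j, ‖toL2 (pd j u)‖ + n * ‖toL2 u‖) * ‖toL2 u‖) := by
  have h0 : -∑ k, pd k (pd k u) = freeOp z u + z • u := by unfold freeOp; abel
  have h1 := morawetz_pos hn u
  rw [h0, toL2_add, inner_add_right, toL2_smul, inner_smul_right, Complex.add_re] at h1
  have h2 : (inner ℂ (toL2 (morawetz u)) (toL2 (freeOp z u))).re ≤
      (∑ j, ‖toL2 (mulS (wt (-3 / 4)) (pd j u))‖ + n * ‖toL2 (mulS (wt (-3 / 4)) u)‖) *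
        ‖toL2 (mulS (wt (3 / 4)) (freeOp z u))‖ :=
    (Complex.re_le_norm _).trans ((norm_inner_le_wt _ _).trans
      (mul_le_mul_of_nonneg_right (norm_mulS_morawetz_le hn (wt_tg _) u) (norm_nonneg _)))
  have h3 : (z * inner ℂ (toL2 (morawetz u)) (toL2 u)).re ≤
      |z.im| * ((∑ j, ‖toL2 (pd j u)‖ + n * ‖toL2 u‖) * ‖toL2 u‖) := by
    rw [Complex.mul_re, morawetz_re_zero, mul_zero, zero_sub]
    have h4 : ‖toL2 (morawetz u)‖ ≤ ∑ j, ‖toL2 (pd j u)‖ + n * ‖toL2 u‖ := by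
      have := norm_mulS_morawetz_le hn (wt_tg (n := n) 0) u
      simpa only [mulS_wt_zero] using this
    have h5 : |(inner ℂ (toL2 (morawetz u)) (toL2 u)).im| ≤ ‖toL2 (morawetz u)‖ * ‖toL2 u‖ :=
      (Complex.abs_im_le_norm _).trans (norm_inner_le_norm _ _)
    calc -(z.im * (inner ℂ (toL2 (morawetz u)) (toL2 u)).im)
        ≤ |z.im * (inner ℂ (toL2 (morawetz u)) (toL2 u)).im| := neg_le_abs _
      _ = |z.im| * |(inner ℂ (toL2 (morawetz u)) (toL2 u)).im| := abs_mul _ _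
      _ ≤ |z.im| * (‖toL2 (morawetz u)‖ * ‖toL2 u‖) := by gcongr
      _ ≤ _ := by gcongr
  linarith

/-- The virial-type identity obtained by pairing the equation with `⟨x⟩⁻³ u`. -/
lemma weighted_energy (z : ℂ) (u : 𝓢(Euc n, ℂ)) :
    z.re * ‖toL2 (mulS (wt (-3 / 4)) u)‖ ^ 2 ≤
      ∑ j, ‖toL2 (mulS (wt (-3 / 4)) (pd j u))‖ ^ 2 +
      3 * ‖toL2 (mulS (wt (-3 / 4)) u)‖ * ∑ j, ‖toL2 (mulS (wt (-3 / 4)) (pd j u))‖ +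
      ‖toL2 (mulS (wt (-3 / 4)) u)‖ * ‖toL2 (mulS (wt (3 / 4)) (freeOp z u))‖ := by
  have hsplit : ∀ v w : 𝓢(Euc n, ℂ), inner ℂ (toL2 (mulS (wt (-3 / 2)) v)) (toL2 w) =
      inner ℂ (toL2 (mulS (wt (-3 / 4)) v)) (toL2 (mulS (wt (-3 / 4)) w)) := by
    intro v w
    rw [← inner_mulS_left (wt_tg _), mulS_mulS (wt_tg _) (wt_tg _)]
    congr 4; ext x; rw [wt_mul]; norm_num
  let g : Fin n → Euc n → ℝ := fun k x => -3 * (x k * wt (-5 / 2) x)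
  have hg : ∀ k, (g k).HasTemperateGrowth := fun k => const_mul_tg _ (cw_tg _ _)
  have hd : ∀ k x, fderiv ℝ (wt (n := n) (-3 / 2)) x (EuclideanSpace.single k 1) = g k x := by
    intro k x; rw [fderiv_wt]; simp only [g]; norm_num
  have h1 := congrArg Complex.re (inner_freeOp z (mulS (wt (-3 / 2)) u) u)
  rw [Complex.sub_re, Complex.re_sum, hsplit u u, inner_toL2_self] at h1
  have h2 : ∀ k, (inner ℂ (toL2 (pd k (mulS (wt (-3 / 2)) u))) (toL2 (pd k u))).re ≤
      ‖toL2 (mulS (wt (-3 / 4)) (pd k u))‖ ^ 2 +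
      3 * ‖toL2 (mulS (wt (-3 / 4)) u)‖ * ‖toL2 (mulS (wt (-3 / 4)) (pd k u))‖ := by
    intro k
    rw [pd_mulS (wt_tg _) (hg k) k (hd k), toL2_add, inner_add_left, hsplit, inner_toL2_self,
      Complex.add_re, Complex.ofReal_re]
    gcongr
    refine (Complex.re_le_norm _).trans ?_
    rw [← norm_inner_symm, mul_comm]
    refine (norm_inner_le_wt _ _).trans ?_
    gcongr
    refine norm_toL2_mono fun x => ?_
    rw [mulS_apply (wt_tg _), mulS_apply (hg k), mulS_apply (wt_tg _)]
    simp only [norm_mul, Complex.norm_real, Real.norm_eq_abs, abs_of_pos (wt_pos _ x), g, ← mul_assoc]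
    refine mul_le_mul_of_nonneg_right ?_ (norm_nonneg _)
    have := abs_coord_mul_wt_le k (-7 / 4) x
    have e : wt (-5 / 2) x * wt (3 / 4) x = wt (-7 / 4) x := by rw [wt_mul]; norm_num
    calc wt (3 / 4) x * |-3| * |x k| * wt (-5 / 2) x
        = 3 * (|x k| * wt (-7 / 4) x) := by rw [← e]; norm_num; ring
      _ ≤ 3 * wt (-7 / 4 + 1 / 2) x := by gcongr
      _ ≤ 3 * wt (-3 / 4) x := by
        gcongr
        exact wt_le_wt (by norm_num) x
  have h3 : -(inner ℂ (toL2 (mulS (wt (-3 / 2)) u)) (toL2 (freeOp z u))).re ≤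
      ‖toL2 (mulS (wt (-3 / 4)) u)‖ * ‖toL2 (mulS (wt (3 / 4)) (freeOp z u))‖ := by
    refine (neg_le_abs _).trans ((Complex.abs_re_le_norm _).trans ?_)
    refine (norm_inner_le_wt _ _).trans ?_
    gcongr
    rw [← one_mul ‖toL2 (mulS (wt (-3 / 4)) u)‖]
    refine norm_toL2_mono fun x => ?_
    simp only [mulS_apply (wt_tg _), norm_mul, Complex.norm_real, Real.norm_eq_abs,
      abs_of_pos (wt_pos _ x)]
    have h4 := wt_le_one (r := -3 / 2) (by norm_num) x
    have h5 : 0 ≤ wt (-3 / 4) x * ‖u x‖ := mul_nonneg (wt_pos _ _).le (norm_nonneg _)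
    nlinarith
  have h6 := Finset.sum_le_sum fun k (_ : k ∈ Finset.univ) => h2 k
  rw [Finset.sum_add_distrib, ← Finset.mul_sum] at h6
  rw [Complex.re_mul_ofReal] at h1
  linarith

lemma energy_im (z : ℂ) (u : 𝓢(Euc n, ℂ)) :
    |z.im| * ‖toL2 u‖ ^ 2 ≤
      ‖toL2 (mulS (wt (-3 / 4)) u)‖ * ‖toL2 (mulS (wt (3 / 4)) (freeOp z u))‖ := by
  refine le_trans (le_of_eq ?_) ((Complex.abs_im_le_norm _).trans (norm_inner_le_wt u (freeOp z u)))
  rw [inner_freeOp, Complex.sub_im, Complex.im_sum]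
  simp only [inner_toL2_self, Complex.ofReal_im, Finset.sum_const_zero, zero_sub,
    Complex.im_mul_ofReal, abs_neg, abs_mul]
  rw [abs_of_nonneg (sq_nonneg ‖toL2 u‖)]

lemma energy_re (z : ℂ) (u : 𝓢(Euc n, ℂ)) :
    ∑ j, ‖toL2 (pd j u)‖ ^ 2 ≤ z.re * ‖toL2 u‖ ^ 2 +
      ‖toL2 (mulS (wt (-3 / 4)) u)‖ * ‖toL2 (mulS (wt (3 / 4)) (freeOp z u))‖ := by
  have h := (Complex.re_le_norm _).trans (norm_inner_le_wt u (freeOp z u))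
  rw [inner_freeOp, Complex.sub_re, Complex.re_sum] at h
  simp only [inner_toL2_self, Complex.ofReal_re, Complex.re_mul_ofReal] at h
  linarith

/-- The constant of the weighted resolvent estimate. -/
def lapC (n : ℕ) : ℝ := 2 * (1 + 9 * (n : ℝ) ^ 2) * n ^ 2 + 2 + 16 * n * (1 + 9 * (n : ℝ) ^ 2)

lemma lapC_pos (n : ℕ) : 0 < lapC n := by unfold lapC; positivity

/-- Absorption of the error terms in the weighted resolvent estimate, as a statement about
real numbers: `U`, `F`, `G` are the weighted norms of `u`, `f`, `∇u`, while `N`, `D` are the plain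
norms of `u`, `∇u`. -/
lemma absorb {m U F G N D e s : ℝ} (hm : 0 ≤ m) (hU : 0 ≤ U) (hF : 0 ≤ F)
    (he : 0 ≤ e) (he1 : e ≤ 1) (hs : 1 ≤ s)
    (h1 : e * N ^ 2 ≤ U * F) (h2 : D ^ 2 ≤ s ^ 2 * N ^ 2 + U * F)
    (h3 : G ^ 2 ≤ (m * G + m * U) * F + e * ((m * D + m * N) * N))
    (h4 : s ^ 2 * U ^ 2 ≤ G ^ 2 + 3 * U * (m * G) + U * F) :
    s * U ≤ (2 * (1 + 9 * m ^ 2) * m ^ 2 + 2 + 16 * m * (1 + 9 * m ^ 2)) * F := by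
  have hUF : 0 ≤ U * F := by positivity
  have hs2 : 1 ≤ s ^ 2 := by nlinarith
  have a1 : e * D ^ 2 ≤ 2 * s ^ 2 * (U * F) := by nlinarith
  have a2 : e * N * D ≤ 2 * s * (U * F) := by
    apply le_of_sq_le_sq _ (by positivity)
    calc (e * N * D) ^ 2 = (e * N ^ 2) * (e * D ^ 2) := by ring
      _ ≤ (U * F) * (2 * s ^ 2 * (U * F)) := by gcongr
      _ ≤ (2 * s * (U * F)) ^ 2 := by
        have : 0 ≤ s ^ 2 * (U * F) ^ 2 := by positivity
        nlinarith
  set X := s * U with hX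
  have hX0 : 0 ≤ X := by positivity
  have a3 : U * F ≤ X * F := by
    rw [hX]; exact mul_le_mul_of_nonneg_right (by nlinarith) hF
  have a4 : G ^ 2 ≤ m * G * F + 4 * m * (X * F) := by
    have : e * ((m * D + m * N) * N) = m * (e * N * D) + m * (e * N ^ 2) := by ring
    rw [this] at h3
    have b1 : m * (e * N * D) ≤ m * (2 * (X * F)) := by
      refine mul_le_mul_of_nonneg_left (a2.trans (le_of_eq ?_)) hm
      rw [hX]; ring
    have b2 : m * (e * N ^ 2) ≤ m * (X * F) := by
      refine mul_le_mul_of_nonneg_left (h1.trans a3) hm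
    have b3 : m * (U * F) ≤ m * (X * F) := mul_le_mul_of_nonneg_left a3 hm
    nlinarith
  have a5 : X ^ 2 ≤ G ^ 2 + (X ^ 2 / 4 + 9 * m ^ 2 * G ^ 2) + (X ^ 2 / 4 + F ^ 2) := by
    have b0 : U ≤ X := by rw [hX]; nlinarith
    have b0' : U ^ 2 ≤ X ^ 2 := by gcongr
    have b1 : 3 * U * (m * G) ≤ U ^ 2 / 4 + 9 * m ^ 2 * G ^ 2 := by
      nlinarith [sq_nonneg (U / 2 - 3 * m * G)]
    have b2 : U * F ≤ U ^ 2 / 4 + F ^ 2 := by nlinarith [sq_nonneg (U / 2 - F)]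
    have b3 : X ^ 2 = s ^ 2 * U ^ 2 := by rw [hX]; ring
    linarith
  have a6 : G ^ 2 ≤ m ^ 2 * F ^ 2 + 8 * m * (X * F) := by
    nlinarith [sq_nonneg (G - m * F)]
  have a7 : X ^ 2 ≤ 2 * (1 + 9 * m ^ 2) * (m ^ 2 * F ^ 2 + 8 * m * (X * F)) + 2 * F ^ 2 := by
    have : (1 + 9 * m ^ 2) * G ^ 2 ≤ (1 + 9 * m ^ 2) * (m ^ 2 * F ^ 2 + 8 * m * (X * F)) := by
      gcongr
    nlinarith
  set a := 2 * (1 + 9 * m ^ 2) * m ^ 2 + 2 with ha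
  set b := 16 * m * (1 + 9 * m ^ 2) with hb
  have ha1 : 1 ≤ a := by rw [ha]; have : 0 ≤ 2 * (1 + 9 * m ^ 2) * m ^ 2 := by positivity
                         linarith
  have hb0 : 0 ≤ b := by positivity
  have a8 : X ^ 2 ≤ a * F ^ 2 + b * (X * F) := by rw [ha, hb]; linarith
  by_cases hc : X ≤ F
  · nlinarith
  · push Not at hc
    have hXpos : 0 < X := lt_of_le_of_lt hF hc
    have : X * X ≤ X * ((a + b) * F) := by nlinarith [mul_nonneg (by linarith : 0 ≤ a) hF]
    exact le_of_mul_le_mul_left this hXpos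

/-- Limiting absorption on Schwartz functions: with `A` the multiplication by `⟨x⟩^{-3/2}`,
`√λ ‖A u‖ ≤ C ‖A⁻¹ (-Δ - z) u‖` uniformly for `z = λ + iσ`, `λ ≥ 1`, `|σ| ≤ 1`. -/
lemma lap_schwartz (hn : 4 ≤ n) {z : ℂ} (hre : 1 ≤ z.re) (him : |z.im| ≤ 1) (u : 𝓢(Euc n, ℂ)) :
    √z.re * ‖toL2 (mulS (wt (-3 / 4)) u)‖ ≤
      lapC n * ‖toL2 (mulS (wt (3 / 4)) (freeOp z u))‖ := by
  have hsum : ∀ c : Fin n → ℝ, (∀ j, 0 ≤ c j) → ∑ j, c j ≤ n * √(∑ j, c j ^ 2) := by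
    intro c hc
    have : ∀ j ∈ Finset.univ, c j ≤ √(∑ j, c j ^ 2) := fun j _ => Real.le_sqrt_of_sq_le
      (Finset.single_le_sum (f := fun j => c j ^ 2) (fun i _ => sq_nonneg _) (Finset.mem_univ j))
    simpa using Finset.sum_le_card_nsmul _ _ _ this
  have sq1 : ∀ c : Fin n → ℝ, √(∑ j, c j ^ 2) ^ 2 = ∑ j, c j ^ 2 := fun c =>
    Real.sq_sqrt (Finset.sum_nonneg fun i _ => sq_nonneg _)
  have g1 := hsum (fun j => ‖toL2 (mulS (wt (-3 / 4)) (pd j u))‖) fun j => norm_nonneg _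
  have g2 := hsum (fun j => ‖toL2 (pd j u)‖) fun j => norm_nonneg _
  have s1 := sq1 (fun j => ‖toL2 (mulS (wt (-3 / 4)) (pd j u))‖)
  have s2 := sq1 (fun j => ‖toL2 (pd j u)‖)
  have hl : √z.re ^ 2 = z.re := Real.sq_sqrt (by linarith)
  refine absorb (m := n) (G := √(∑ j, ‖toL2 (mulS (wt (-3 / 4)) (pd j u))‖ ^ 2))
    (N := ‖toL2 u‖) (D := √(∑ j, ‖toL2 (pd j u)‖ ^ 2)) (e := |z.im|) (by positivity) (norm_nonneg _)
    (norm_nonneg _) (abs_nonneg _) him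
    (Real.one_le_sqrt.2 hre) (energy_im z u) ?_ ?_ ?_
  · rw [s2, hl]; exact energy_re z u
  · rw [s1]
    refine (grad_le hn z u).trans ?_
    gcongr
  · rw [s1, hl]
    refine (weighted_energy z u).trans ?_
    gcongr

end LimitingAbsorption

/-! ### Multiplication operators -/

section MulOp

variable {n : ℕ}

lemma memLp_mul {g : Euc n → ℝ} {c : ℝ} (hg : Measurable g) (hc : ∀ x, |g x| ≤ c) (u : L2 n) :
    MemLp (fun x => (g x : ℂ) * u x) 2 volume := by
  refine (Lp.memLp u).of_le_mul (c := c) ?_ (Eventually.of_forall fun x => ?_)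
  · exact (Complex.measurable_ofReal.comp hg).aestronglyMeasurable.mul (Lp.aestronglyMeasurable u)
  · rw [norm_mul, Complex.norm_real, Real.norm_eq_abs]
    gcongr
    exact hc x

/-- Multiplication by a bounded real function as a bounded operator on `L²`. -/
def mulOp (g : Euc n → ℝ) (hg : Measurable g) (c : ℝ) (hc : ∀ x, |g x| ≤ c) : L2 n →L[ℂ] L2 n :=
  LinearMap.mkContinuous
    { toFun := fun u => (memLp_mul hg hc u).toLp
      map_add' := fun u v => by
        rw [← MemLp.toLp_add, MemLp.toLp_eq_toLp_iff]
        filter_upwards [Lp.coeFn_add u v] with x hx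
        rw [hx]; simp [mul_add]
      map_smul' := fun a u => by
        rw [RingHom.id_apply, ← MemLp.toLp_const_smul, MemLp.toLp_eq_toLp_iff]
        filter_upwards [Lp.coeFn_smul a u] with x hx
        rw [hx]; simp; ring }
    c (fun u => by
      refine Lp.norm_le_mul_norm_of_ae_le_mul ?_
      filter_upwards [MemLp.coeFn_toLp (memLp_mul hg hc u)] with x hx
      simp only [LinearMap.coe_mk, AddHom.coe_mk]
      rw [hx, norm_mul, Complex.norm_real, Real.norm_eq_abs]
      gcongr
      exact hc x)

variable {g : Euc n → ℝ} {hg : Measurable g} {c : ℝ} {hc : ∀ x, |g x| ≤ c}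

lemma coeFn_mulOp (u : L2 n) : mulOp g hg c hc u =ᵐ[volume] fun x => (g x : ℂ) * u x :=
  MemLp.coeFn_toLp (memLp_mul hg hc u)

lemma norm_mulOp_le (h0 : 0 ≤ c) : ‖mulOp g hg c hc‖ ≤ c :=
  LinearMap.mkContinuous_norm_le _ h0 _

lemma mulOp_symm (u v : L2 n) :
    inner ℂ (mulOp g hg c hc u) v = inner ℂ u (mulOp g hg c hc v) := by
  rw [L2.inner_def, L2.inner_def]
  apply integral_congr_ae
  filter_upwards [coeFn_mulOp (hg := hg) (hc := hc) u, coeFn_mulOp (hg := hg) (hc := hc) v]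
    with x hx hy
  rw [hx, hy]
  simp
  ring

lemma mulOp_toL2 (ht : g.HasTemperateGrowth) (u : 𝓢(Euc n, ℂ)) :
    mulOp g hg c hc (toL2 u) = toL2 (mulS g u) := by
  apply Lp.ext
  filter_upwards [coeFn_mulOp (hg := hg) (hc := hc) (toL2 u), coeFn_toL2 u, coeFn_toL2 (mulS g u)]
    with x h1 h2 h3
  rw [h1, h2, h3, mulS_apply ht]

lemma measurable_wt (r : ℝ) : Measurable (wt (n := n) r) := by
  unfold wt; fun_prop

/-- The operator of multiplication by `⟨x⟩^{-3/2}`. -/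
def wA (n : ℕ) : L2 n →L[ℂ] L2 n :=
  mulOp (wt (-3 / 4)) (measurable_wt _) 1
    (fun x => by rw [abs_of_pos (wt_pos _ x)]; exact wt_le_one (by norm_num) x)

lemma norm_wA_le : ‖wA n‖ ≤ 1 := norm_mulOp_le zero_le_one

lemma norm_wA_apply_le (u : L2 n) : ‖wA n u‖ ≤ ‖u‖ := by
  simpa using (wA n).le_of_opNorm_le norm_wA_le u

lemma wA_symm (u v : L2 n) : inner ℂ (wA n u) v = inner ℂ u (wA n v) := mulOp_symm u v

lemma wA_toL2 (u : 𝓢(Euc n, ℂ)) : wA n (toL2 u) = toL2 (mulS (wt (-3 / 4)) u) :=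
  mulOp_toL2 (wt_tg _) u

/-- The weighted potential `⟨x⟩³ V` is bounded as soon as `V` decays like `⟨x⟩^{-δ}`, `δ ≥ 3`. -/
lemma abs_weighted_potential_le {V : Euc n → ℝ} {C₀ δ : ℝ} (hC₀ : 0 < C₀) (hδ : 3 ≤ δ)
    (hV : ∀ x, |V x| ≤ C₀ * jb x ^ (-δ)) (x : Euc n) : |V x * wt (3 / 2) x| ≤ C₀ := by
  rw [abs_mul, abs_of_pos (wt_pos _ x)]
  have h1 : jb x ^ (-δ) = wt (-δ / 2) x := by
    unfold jb wt
    rw [Real.sqrt_eq_rpow, ← Real.rpow_mul (by positivity)]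
    congr 1; ring
  have h2 : wt (-δ / 2) x * wt (3 / 2) x ≤ 1 := by
    rw [wt_mul]; exact wt_le_one (by linarith) x
  calc |V x| * wt (3 / 2) x ≤ C₀ * wt (-δ / 2) x * wt (3 / 2) x := by
        gcongr
        · exact (wt_pos _ x).le
        · rw [← h1]; exact hV x
    _ ≤ C₀ * 1 := by rw [mul_assoc]; gcongr
    _ = C₀ := mul_one _

end MulOp

/-! ### Resolvents in the functional calculus -/

section FunctionalCalculus

variable {n : ℕ} {T : L2 n →ₗ.[ℂ] L2 n} {fc : (ℝ → ℂ) → (L2 n →L[ℂ] L2 n)}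

/-- The function `x ↦ (x - z)⁻¹` on the real line. -/
def resF (z : ℂ) : ℝ → ℂ := fun x => ((x : ℂ) - z)⁻¹

lemma im_le_norm_sub (z : ℂ) (x : ℝ) : |z.im| ≤ ‖(x : ℂ) - z‖ := by
  have := Complex.abs_im_le_norm ((x : ℂ) - z)
  simpa using this

lemma re_le_norm_sub (z : ℂ) (x : ℝ) : |x - z.re| ≤ ‖(x : ℂ) - z‖ := by
  have := Complex.abs_re_le_norm ((x : ℂ) - z)
  simpa using this

lemma ofReal_sub_ne {z : ℂ} (hz : z.im ≠ 0) (x : ℝ) : (x : ℂ) - z ≠ 0 := by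
  rw [← norm_pos_iff]
  exact lt_of_lt_of_le (abs_pos.2 hz) (im_le_norm_sub z x)

lemma resF_meas (z : ℂ) : Measurable (resF z) := by unfold resF; fun_prop

lemma norm_resF_le {z : ℂ} (hz : z.im ≠ 0) (x : ℝ) : ‖resF z x‖ ≤ |z.im|⁻¹ := by
  unfold resF
  rw [norm_inv]
  exact inv_anti₀ (abs_pos.2 hz) (im_le_norm_sub z x)

lemma sa_symm (hS : IsSelfAdjoint T) (u v : T.domain) :
    inner ℂ (T u) (v : L2 n) = inner ℂ (u : L2 n) (T v) := by
  have h1 := LinearPMap.adjoint_isFormalAdjoint hS.dense_domain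
  rw [LinearPMap.isSelfAdjoint_def.1 hS] at h1
  exact h1 u v

/-- A self-adjoint operator has no non-real eigenvalues. -/
lemma sa_inj (hS : IsSelfAdjoint T) {z : ℂ} (hz : z.im ≠ 0) (u : T.domain)
    (h : T u = z • (u : L2 n)) : (u : L2 n) = 0 := by
  have h1 := sa_symm hS u u
  rw [h, inner_smul_left, inner_smul_right] at h1
  have h2 : (conj z - z) * inner ℂ (u : L2 n) (u : L2 n) = 0 := by rw [sub_mul, h1, sub_self]
  rcases mul_eq_zero.1 h2 with h3 | h3
  · exfalso
    have := congrArg Complex.im h3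
    simp at this
    exact hz (by linarith)
  · exact inner_self_eq_zero.1 h3

variable (hS : IsSelfAdjoint T) (hfc : IsBorelFunctionalCalculus T fc)

lemma rs_spec (hfc : IsBorelFunctionalCalculus T fc) {z : ℂ} (hz : z.im ≠ 0) (u : L2 n) :
    ∃ v : T.domain, (v : L2 n) = fc (resF z) u ∧ T v = z • (v : L2 n) + u :=
  hfc.resolvent z hz u

lemma rs_left_inv (hS : IsSelfAdjoint T) (hfc : IsBorelFunctionalCalculus T fc) {z : ℂ}
    (hz : z.im ≠ 0) (u : T.domain) : fc (resF z) (T u - z • (u : L2 n)) = u := by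
  obtain ⟨v, hv, hTv⟩ := rs_spec hfc hz (T u - z • (u : L2 n))
  rw [← hv]
  have : ((v - u : T.domain) : L2 n) = 0 := by
    apply sa_inj hS hz
    rw [LinearPMap.map_sub, hTv, Submodule.coe_sub, smul_sub]
    abel
  rw [Submodule.coe_sub] at this
  exact sub_eq_zero.1 this

lemma rs_sub_rs (hS : IsSelfAdjoint T) (hfc : IsBorelFunctionalCalculus T fc) {z w : ℂ}
    (hz : z.im ≠ 0) (hw : w.im ≠ 0) (u : L2 n) :
    fc (resF z) u - fc (resF w) u = (z - w) • fc (resF z) (fc (resF w) u) := by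
  obtain ⟨v, hv, hTv⟩ := rs_spec hfc hw u
  have h1 := rs_left_inv hS hfc hz v
  have h2 : T v - z • (v : L2 n) = u - (z - w) • (v : L2 n) := by rw [hTv, sub_smul]; abel
  rw [h2, map_sub, map_smul] at h1
  rw [← hv, sub_eq_iff_eq_add, ← sub_eq_iff_eq_add']
  exact h1

lemma rs_dense (hS : IsSelfAdjoint T) (hfc : IsBorelFunctionalCalculus T fc) {z : ℂ}
    (hz : z.im ≠ 0) : DenseRange (fc (resF z)) := by
  have h := hS.dense_domain
  refine h.mono ?_
  intro u hu
  exact ⟨_, rs_left_inv hS hfc hz ⟨u, hu⟩⟩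

/-- Complex homogeneity of the functional calculus, which is only assumed additive and
multiplicative, follows from the first resolvent identity: with `z - w = c`, compare
`fc (c * resF z * resF w)` with `fc (resF z) - fc (resF w)` on the dense range of the resolvents. -/
lemma fc_const (hS : IsSelfAdjoint T) (hfc : IsBorelFunctionalCalculus T fc) (c : ℂ) (u : L2 n) :
    fc (fun _ => c) u = c • u := by
  obtain ⟨w, z, hw, hz, hzw⟩ : ∃ w z : ℂ, w.im ≠ 0 ∧ z.im ≠ 0 ∧ z - w = c := by
    refine ⟨(((|c.im| + 1 : ℝ)) : ℂ) * Complex.I, c + (((|c.im| + 1 : ℝ)) : ℂ) * Complex.I, ?_, ?_,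
      by ring⟩
    · simp; positivity
    · simp
      have := neg_abs_le c.im
      intro h
      linarith
  have bz : ∃ M, ∀ x, ‖resF z x‖ ≤ M := ⟨_, norm_resF_le hz⟩
  have bw : ∃ M, ∀ x, ‖resF w x‖ ≤ M := ⟨_, norm_resF_le hw⟩
  have bc : ∃ M, ∀ x : ℝ, ‖(fun _ : ℝ => c) x‖ ≤ M := ⟨‖c‖, fun _ => le_rfl⟩
  have bzw : ∃ M, ∀ x, ‖resF z x * resF w x‖ ≤ M :=
    ⟨|z.im|⁻¹ * |w.im|⁻¹, fun x => by
      rw [norm_mul]; gcongr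
      exacts [norm_resF_le hz x, norm_resF_le hw x]⟩
  have mzw : Measurable fun x => resF z x * resF w x := (resF_meas z).mul (resF_meas w)
  have bczw : ∃ M, ∀ x, ‖c * (resF z x * resF w x)‖ ≤ M := by
    obtain ⟨M, hM⟩ := bzw
    exact ⟨‖c‖ * M, fun x => by rw [norm_mul]; gcongr; exact hM x⟩
  -- The pointwise resolvent identity, transported by the functional calculus.
  have e1 : fc (resF z) = fc (fun x => c * (resF z x * resF w x)) + fc (resF w) := by
    rw [← hfc.map_add (fun x => c * (resF z x * resF w x)) _ (measurable_const.mul mzw) (resF_meas w) bczw bw]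
    congr 1; ext x
    have h1 := ofReal_sub_ne hz x
    have h2 := ofReal_sub_ne hw x
    simp only [resF, ← hzw]
    field_simp
    ring
  rw [hfc.map_mul _ _ measurable_const mzw bc bzw, hfc.map_mul _ _ (resF_meas z) (resF_meas w) bz bw]
    at e1
  have key : (fc fun _ => c) ∘ (fc (resF z) ∘ fc (resF w)) =
      (fun v => c • v) ∘ (fc (resF z) ∘ fc (resF w)) := by
    ext1 v
    have h1 := rs_sub_rs hS hfc hz hw v
    have h2 := congrArg (fun L : L2 n →L[ℂ] L2 n => L v) e1
    simp only [add_apply, ContinuousLinearMap.comp_apply] at h2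
    simp only [Function.comp_apply]
    rw [← hzw, ← h1, h2, ← hzw]
    abel
  have hd : DenseRange (fc (resF z) ∘ fc (resF w)) :=
    (rs_dense hS hfc hz).comp (rs_dense hS hfc hw) (fc (resF z)).continuous
  exact congrFun (hd.equalizer (fc fun _ => c).continuous (continuous_const_smul c) key) u

lemma fc_smul (hS : IsSelfAdjoint T) (hfc : IsBorelFunctionalCalculus T fc) (c : ℂ) {f : ℝ → ℂ}
    (hf : Measurable f) (hb : ∃ M, ∀ x, ‖f x‖ ≤ M) : fc (fun x => c * f x) = c • fc f := by
  rw [hfc.map_mul (fun _ => c) f measurable_const hf ⟨‖c‖, fun _ => le_rfl⟩ hb]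
  ext1 u
  simp [fc_const hS hfc]

/-- The functional calculus as a bounded linear map on bounded continuous functions. -/
def fcL (hS : IsSelfAdjoint T) (hfc : IsBorelFunctionalCalculus T fc) :
    BoundedContinuousFunction ℝ ℂ →L[ℂ] (L2 n →L[ℂ] L2 n) :=
  LinearMap.mkContinuous
    { toFun := fun f => fc f
      map_add' := fun f g => hfc.map_add f g f.continuous.measurable g.continuous.measurable
        ⟨_, f.norm_coe_le_norm⟩ ⟨_, g.norm_coe_le_norm⟩
      map_smul' := fun c f => fc_smul hS hfc c f.continuous.measurable ⟨_, f.norm_coe_le_norm⟩ }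
    1 (fun f => by
      rw [one_mul]
      exact hfc.norm_le f _ f.continuous.measurable f.norm_coe_le_norm)

lemma fcL_apply (f : BoundedContinuousFunction ℝ ℂ) : fcL hS hfc f = fc f := rfl

lemma norm_rs_le (hfc : IsBorelFunctionalCalculus T fc) {z : ℂ} (hz : z.im ≠ 0) :
    ‖fc (resF z)‖ ≤ |z.im|⁻¹ := hfc.norm_le _ _ (resF_meas z) (norm_resF_le hz)

lemma rs_adjoint (hS : IsSelfAdjoint T) (hfc : IsBorelFunctionalCalculus T fc) {z : ℂ}
    (hz : z.im ≠ 0) (u v : L2 n) :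
    inner ℂ (fc (resF z) u) v = inner ℂ u (fc (resF (conj z)) v) := by
  have hz' : (conj z).im ≠ 0 := by simpa using hz
  obtain ⟨a, ha, hTa⟩ := rs_spec hfc hz u
  obtain ⟨b, hb, hTb⟩ := rs_spec hfc hz' v
  have h1 := sa_symm hS a b
  rw [hTa, hTb, inner_add_left, inner_add_right, inner_smul_left, inner_smul_right] at h1
  rw [← ha, ← hb]
  exact (add_left_cancel h1).symm

lemma rs_comm (hfc : IsBorelFunctionalCalculus T fc) {z w : ℂ}
    (hz : z.im ≠ 0) (hw : w.im ≠ 0) :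
    (fc (resF z)).comp (fc (resF w)) = (fc (resF w)).comp (fc (resF z)) := by
  rw [← hfc.map_mul _ _ (resF_meas z) (resF_meas w) ⟨_, norm_resF_le hz⟩ ⟨_, norm_resF_le hw⟩,
    ← hfc.map_mul _ _ (resF_meas w) (resF_meas z) ⟨_, norm_resF_le hw⟩ ⟨_, norm_resF_le hz⟩]
  congr 1; ext x; ring

lemma rs_sub_rs' (hS : IsSelfAdjoint T) (hfc : IsBorelFunctionalCalculus T fc) {z w : ℂ}
    (hz : z.im ≠ 0) (hw : w.im ≠ 0) :
    fc (resF z) - fc (resF w) = (z - w) • (fc (resF z)).comp (fc (resF w)) := by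
  ext1 u
  simpa using rs_sub_rs hS hfc hz hw u

lemma rs_continuousAt (hS : IsSelfAdjoint T) (hfc : IsBorelFunctionalCalculus T fc) {z : ℂ}
    (hz : z.im ≠ 0) : ContinuousAt (fun w => fc (resF w)) z := by
  have hpos : 0 < |z.im| := abs_pos.2 hz
  have hev : ∀ᶠ w : ℂ in 𝓝 z, |z.im| / 2 < |w.im| :=
    (Complex.continuous_im.abs.tendsto z).eventually (lt_mem_nhds (by linarith))
  rw [ContinuousAt, tendsto_iff_norm_sub_tendsto_zero]
  have hlim : Tendsto (fun w : ℂ => ‖w - z‖ * ((|z.im| / 2)⁻¹ * |z.im|⁻¹)) (𝓝 z) (𝓝 0) := by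
    have : Continuous fun w : ℂ => ‖w - z‖ * ((|z.im| / 2)⁻¹ * |z.im|⁻¹) := by fun_prop
    simpa using this.tendsto z
  refine squeeze_zero' (Eventually.of_forall fun _ => norm_nonneg _) ?_ hlim
  filter_upwards [hev] with w hw
  have hw0 : w.im ≠ 0 := abs_pos.1 (by linarith)
  rw [rs_sub_rs' hS hfc hw0 hz, norm_smul]
  gcongr
  refine (ContinuousLinearMap.opNorm_comp_le _ _).trans ?_
  gcongr
  · exact (norm_rs_le hfc hw0).trans (inv_anti₀ (by linarith) hw.le)
  · exact norm_rs_le hfc hz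

lemma rs_differentiableAt (hS : IsSelfAdjoint T) (hfc : IsBorelFunctionalCalculus T fc) {z : ℂ}
    (hz : z.im ≠ 0) : DifferentiableAt ℂ (fun w => fc (resF w)) z := by
  have : HasDerivAt (fun w => fc (resF w)) ((fc (resF z)).comp (fc (resF z))) z := by
    rw [hasDerivAt_iff_tendsto_slope]
    have h1 : Tendsto (fun w => (fc (resF w)).comp (fc (resF z))) (𝓝[≠] z)
        (𝓝 ((fc (resF z)).comp (fc (resF z)))) :=
      (((rs_continuousAt hS hfc hz).clm_comp continuousAt_const).tendsto).mono_left nhdsWithin_le_nhds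
    refine h1.congr' ?_
    have hev : ∀ᶠ w : ℂ in 𝓝[≠] z, w.im ≠ 0 :=
      ((Complex.continuous_im.tendsto z).eventually_ne hz).filter_mono nhdsWithin_le_nhds
    filter_upwards [hev, self_mem_nhdsWithin] with w hw hne
    rw [slope_def_module, rs_sub_rs' hS hfc hw hz, smul_smul, inv_mul_cancel₀ (sub_ne_zero.2 hne),
      one_smul]
  exact this.differentiableAt

end FunctionalCalculus

/-! ### Resolvents of Schrödinger operators -/

section Schrodinger

variable {n : ℕ}

/-- The resolvent of `-Δ + V` on the image of the Schwartz space. -/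
lemma rs_schwartz {V : Euc n → ℝ} {T : L2 n →ₗ.[ℂ] L2 n} (hT : IsSchrodingerOp V T)
    {fc : (ℝ → ℂ) → (L2 n →L[ℂ] L2 n)} (hfc : IsBorelFunctionalCalculus T fc)
    {B : L2 n →L[ℂ] L2 n} (hB : ∀ u : L2 n, B u =ᵐ[volume] fun x => (V x : ℂ) * u x)
    {z : ℂ} (hz : z.im ≠ 0) (u : 𝓢(Euc n, ℂ)) :
    fc (resF z) (toL2 (freeOp z u) + B (toL2 u)) = toL2 u := by
  obtain ⟨v, hv, hTv⟩ := hT.eq_on_schwartz u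
  have e1 : (v : L2 n) = toL2 u := Lp.ext (hv.trans (coeFn_toL2 u).symm)
  have e2 : T v - z • (v : L2 n) = toL2 (freeOp z u) + B (toL2 u) := by
    rw [e1]
    apply Lp.ext
    filter_upwards [Lp.coeFn_sub (T v) (z • toL2 u), Lp.coeFn_smul z (toL2 u), coeFn_toL2 u,
      coeFn_toL2 (freeOp z u), Lp.coeFn_add (toL2 (freeOp z u)) (B (toL2 u)), hB (toL2 u), hTv]
      with x h1 h2 h3 h4 h5 h6 h7
    rw [h1, h5, Pi.sub_apply, Pi.add_apply, h2, h4, h6, h7, Pi.smul_apply, h3, lapl_eq, freeOp,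
      sub_apply, neg_apply, smul_apply]
    ring
  rw [← e2, rs_left_inv hT.selfAdjoint hfc hz, e1]

lemma rs_free_schwartz {T₀ : L2 n →ₗ.[ℂ] L2 n} (hT₀ : IsSchrodingerOp (fun _ => (0 : ℝ)) T₀)
    {fc₀ : (ℝ → ℂ) → (L2 n →L[ℂ] L2 n)} (hfc₀ : IsBorelFunctionalCalculus T₀ fc₀)
    {z : ℂ} (hz : z.im ≠ 0) (u : 𝓢(Euc n, ℂ)) :
    fc₀ (resF z) (toL2 (freeOp z u)) = toL2 u := by
  have := rs_schwartz hT₀ hfc₀ (B := 0) (fun v => by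
    filter_upwards [Lp.coeFn_zero ℂ 2 (volume : Measure (Euc n))] with x hx
    simp) hz u
  simpa using this

/-- Limiting absorption for the free resolvent between weighted spaces. -/
lemma norm_weighted_rs_le (hn : 4 ≤ n)
    {T₀ : L2 n →ₗ.[ℂ] L2 n} (hT₀ : IsSchrodingerOp (fun _ => (0 : ℝ)) T₀)
    {fc₀ : (ℝ → ℂ) → (L2 n →L[ℂ] L2 n)} (hfc₀ : IsBorelFunctionalCalculus T₀ fc₀)
    {z : ℂ} (hre : 1 ≤ z.re) (hz : z.im ≠ 0) (him : |z.im| ≤ 1) (v : L2 n) :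
    ‖wA n (fc₀ (resF z) (wA n v))‖ ≤ lapC n / √z.re * ‖v‖ := by
  refine denseRange_toL2.induction_on (p := fun v : L2 n =>
    ‖wA n (fc₀ (resF z) (wA n v))‖ ≤ lapC n / √z.re * ‖v‖) v ?_ ?_
  · apply isClosed_le <;> fun_prop
  · intro w
    obtain ⟨u, hu⟩ := freeOp_surj hz (mulS (wt (-3 / 4)) w)
    rw [wA_toL2, ← hu, rs_free_schwartz hT₀ hfc₀ hz, wA_toL2]
    have h1 := lap_schwartz hn hre him u
    have h2 : mulS (wt (3 / 4)) (mulS (wt (-3 / 4)) w) = w := by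
      rw [mulS_mulS (wt_tg _) (wt_tg _)]
      have : (fun x : Euc n => wt (3 / 4) x * wt (-3 / 4) x) = wt 0 := by
        ext x; rw [wt_mul]; norm_num
      rw [this, mulS_wt_zero]
    rw [hu, h2] at h1
    have hs : 0 < √z.re := Real.sqrt_pos.2 (by linarith)
    rw [div_mul_eq_mul_div, le_div_iff₀ hs, mul_comm]
    exact h1

variable {V : Euc n → ℝ} {T₀ T : L2 n →ₗ.[ℂ] L2 n} {fc₀ fc : (ℝ → ℂ) → (L2 n →L[ℂ] L2 n)}
  {B : L2 n →L[ℂ] L2 n}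

/-- The resolvent identity `R = R₀ - R V R₀`, with `B` the operator of multiplication by `V`. -/
lemma second_resolvent (hT₀ : IsSchrodingerOp (fun _ => (0 : ℝ)) T₀)
    (hfc₀ : IsBorelFunctionalCalculus T₀ fc₀) (hT : IsSchrodingerOp V T)
    (hfc : IsBorelFunctionalCalculus T fc)
    (hB : ∀ u : L2 n, B u =ᵐ[volume] fun x => (V x : ℂ) * u x)
    {z : ℂ} (hz : z.im ≠ 0) (f : L2 n) :
    fc (resF z) f = fc₀ (resF z) f - fc (resF z) (B (fc₀ (resF z) f)) := by
  refine denseRange_toL2.induction_on (p := fun f : L2 n =>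
    fc (resF z) f = fc₀ (resF z) f - fc (resF z) (B (fc₀ (resF z) f))) f ?_ ?_
  · apply isClosed_eq <;> fun_prop
  · intro w
    obtain ⟨u, rfl⟩ := freeOp_surj hz w
    have h1 := rs_schwartz hT hfc hB hz u
    rw [map_add] at h1
    rw [rs_free_schwartz hT₀ hfc₀ hz]
    exact eq_sub_of_add_eq h1

/-- The resolvent identity `R = R₀ - R₀ V R`, obtained from the other order by taking adjoints. -/
lemma second_resolvent' (hT₀ : IsSchrodingerOp (fun _ => (0 : ℝ)) T₀)
    (hfc₀ : IsBorelFunctionalCalculus T₀ fc₀) (hT : IsSchrodingerOp V T)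
    (hfc : IsBorelFunctionalCalculus T fc)
    (hB : ∀ u : L2 n, B u =ᵐ[volume] fun x => (V x : ℂ) * u x)
    (hBs : ∀ u v : L2 n, inner ℂ (B u) v = inner ℂ u (B v))
    {z : ℂ} (hz : z.im ≠ 0) (f : L2 n) :
    fc (resF z) f = fc₀ (resF z) f - fc₀ (resF z) (B (fc (resF z) f)) := by
  have hz' : (conj z).im ≠ 0 := by simpa using hz
  have cc : conj (conj z) = z := Complex.conj_conj z
  refine ext_inner_left ℂ fun g => ?_
  have h1 := rs_adjoint hT.selfAdjoint hfc hz' g f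
  have h2 := rs_adjoint hT₀.selfAdjoint hfc₀ hz' g f
  have h3 := rs_adjoint hT.selfAdjoint hfc hz' (B (fc₀ (resF (conj z)) g)) f
  have h4 := rs_adjoint hT₀.selfAdjoint hfc₀ hz' g (B (fc (resF z) f))
  rw [cc] at h1 h2 h3 h4
  rw [inner_sub_right, ← h1, second_resolvent hT₀ hfc₀ hT hfc hB hz', inner_sub_left, h2, h3, hBs,
    h4]

/-- At high energy the perturbed resolvent is as smooth as the free one: the factor `A R₀ A W`
has norm at most `1/2` and can be absorbed. -/
lemma weighted_rs_le (hT₀ : IsSchrodingerOp (fun _ => (0 : ℝ)) T₀)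
    (hfc₀ : IsBorelFunctionalCalculus T₀ fc₀) (hT : IsSchrodingerOp V T)
    (hfc : IsBorelFunctionalCalculus T fc) (hn : 4 ≤ n)
    (hB : ∀ u : L2 n, B u =ᵐ[volume] fun x => (V x : ℂ) * u x)
    (hBs : ∀ u v : L2 n, inner ℂ (B u) v = inner ℂ u (B v))
    {W : L2 n →L[ℂ] L2 n} {c : ℝ} (hW : ‖W‖ ≤ c) (hBW : ∀ u, B u = wA n (W (wA n u)))
    {z : ℂ} (hre : 1 ≤ z.re) (hz : z.im ≠ 0) (him : |z.im| ≤ 1)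
    (hlarge : 2 * (lapC n * c) ≤ √z.re) (f : L2 n) :
    ‖wA n (fc (resF z) f)‖ ≤ 2 * ‖wA n (fc₀ (resF z) f)‖ := by
  have h1 := congrArg (wA n) (second_resolvent' hT₀ hfc₀ hT hfc hB hBs hz f)
  rw [map_sub, hBW] at h1
  have hs : 0 < √z.re := Real.sqrt_pos.2 (by linarith)
  have h2 := norm_weighted_rs_le hn hT₀ hfc₀ hre hz him (W (wA n (fc (resF z) f)))
  have h3 : ‖W (wA n (fc (resF z) f))‖ ≤ c * ‖wA n (fc (resF z) f)‖ := W.le_of_opNorm_le hW _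
  have h4 : lapC n / √z.re * (c * ‖wA n (fc (resF z) f)‖) ≤ 1 / 2 * ‖wA n (fc (resF z) f)‖ := by
    rw [← mul_assoc]
    gcongr
    rw [div_mul_eq_mul_div, div_le_div_iff₀ hs (by norm_num)]
    linarith
  have h5 := norm_sub_le (wA n (fc₀ (resF z) f))
    (wA n (fc₀ (resF z) (wA n (W (wA n (fc (resF z) f))))))
  rw [← h1] at h5
  have h6 : lapC n / √z.re * ‖W (wA n (fc (resF z) f))‖ ≤
      lapC n / √z.re * (c * ‖wA n (fc (resF z) f)‖) :=
    mul_le_mul_of_nonneg_left h3 (div_nonneg (lapC_pos n).le hs.le)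
  linarith

end Schrodinger

/-! ### Poisson kernels -/

section Poisson

/-- The spectral parameter `l + i e`. -/
def zp (l e : ℝ) : ℂ := ⟨l, e⟩

lemma conj_zp (l e : ℝ) : conj (zp l e) = zp l (-e) := rfl

/-- The Poisson kernel `x ↦ e / ((x - l)² + e²)` on the real line. -/
def pois (e l x : ℝ) : ℝ := e / ((x - l) ^ 2 + e ^ 2)

lemma pois_den_pos {e : ℝ} (he : 0 < e) (l x : ℝ) : 0 < (x - l) ^ 2 + e ^ 2 := by positivity

lemma pois_nonneg {e : ℝ} (he : 0 < e) (l x : ℝ) : 0 ≤ pois e l x := by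
  unfold pois; positivity

lemma pois_eq_mul {e : ℝ} (he : 0 < e) (l x : ℝ) :
    (pois e l x : ℂ) = e * (resF (zp l e) x * resF (zp l (-e)) x) := by
  have h := pois_den_pos he l x
  have h' : ((x : ℂ) - zp l e) * ((x : ℂ) - zp l (-e)) = (((x - l) ^ 2 + e ^ 2 : ℝ) : ℂ) := by
    apply Complex.ext
    · rw [Complex.ofReal_re]; simp [zp]; ring
    · rw [Complex.ofReal_im]; simp [zp]; ring
  unfold pois resF
  rw [← mul_inv, h']
  push_cast
  rw [div_eq_mul_inv]

lemma pois_eq_im (e l x : ℝ) : pois e l x = (resF (zp l e) x).im := by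
  unfold pois resF
  rw [Complex.inv_im, Complex.normSq_apply]
  simp [zp]
  ring

lemma pois_le {e : ℝ} (he : 0 < e) (l x : ℝ) : pois e l x ≤ e⁻¹ := by
  unfold pois
  rw [div_le_iff₀ (pois_den_pos he l x)]
  have h1 : e⁻¹ * e ^ 2 = e := by field_simp
  have h2 : 0 ≤ e⁻¹ * (x - l) ^ 2 := by positivity
  rw [mul_add, h1]; linarith

lemma pois_lipschitz {e : ℝ} (he : 0 < e) (l m x : ℝ) :
    |pois e l x - pois e m x| ≤ |l - m| * (e⁻¹ * e⁻¹) := by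
  rw [pois_eq_im, pois_eq_im, ← Complex.sub_im]
  refine (Complex.abs_im_le_norm _).trans ?_
  have hl : (zp l e).im ≠ 0 := he.ne'
  have hm : (zp m e).im ≠ 0 := he.ne'
  have h1 : resF (zp l e) x - resF (zp m e) x =
      ((l - m : ℝ) : ℂ) * (resF (zp l e) x * resF (zp m e) x) := by
    have a1 := ofReal_sub_ne hl x
    have a2 := ofReal_sub_ne hm x
    have a3 : ((l - m : ℝ) : ℂ) = ((x : ℂ) - zp m e) - ((x : ℂ) - zp l e) := by
      apply Complex.ext <;> simp [zp]
    rw [a3]; unfold resF; field_simp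
  rw [h1, norm_mul, norm_mul, Complex.norm_real, Real.norm_eq_abs]
  have b1 := norm_resF_le hl x
  have b2 := norm_resF_le hm x
  have b3 : |(zp l e).im| = e := abs_of_pos he
  have b4 : |(zp m e).im| = e := abs_of_pos he
  rw [b3] at b1
  rw [b4] at b2
  gcongr

lemma pois_continuous {e : ℝ} (he : 0 < e) (l : ℝ) : Continuous (pois e l) := by
  unfold pois
  exact continuous_const.div (by fun_prop) fun x => (pois_den_pos he l x).ne.symm

/-- The Poisson kernel as a bounded continuous function. -/
def poisB {e : ℝ} (he : 0 < e) (l : ℝ) : BoundedContinuousFunction ℝ ℂ :=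
  BoundedContinuousFunction.ofNormedAddCommGroup (fun x => (pois e l x : ℂ))
    (Complex.continuous_ofReal.comp (pois_continuous he l)) e⁻¹ (fun x => by
      rw [Complex.norm_real, Real.norm_eq_abs, abs_of_nonneg (pois_nonneg he l x)]
      exact pois_le he l x)

lemma poisB_apply {e : ℝ} (he : 0 < e) (l x : ℝ) : poisB he l x = (pois e l x : ℂ) := rfl

lemma poisB_continuous {e : ℝ} (he : 0 < e) : Continuous (poisB he) := by
  have : LipschitzWith (e⁻¹ * e⁻¹).toNNReal (poisB he) := by
    apply LipschitzWith.of_dist_le_mul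
    intro l m
    rw [BoundedContinuousFunction.dist_le (by positivity)]
    intro x
    rw [poisB_apply, poisB_apply, Complex.dist_of_im_eq (by simp), Complex.ofReal_re,
      Complex.ofReal_re, Real.dist_eq, Real.dist_eq, Real.coe_toNNReal _ (by positivity), mul_comm]
    exact pois_lipschitz he l m x
  exact this.continuous

lemma integral_pois_le {e : ℝ} (he : 0 < e) (x a b : ℝ) : ∫ l in a..b, pois e l x ≤ π := by
  have hd : ∀ l ∈ uIcc a b, HasDerivAt (fun l => Real.arctan ((l - x) / e)) (pois e l x) l := by
    intro l _
    have h1 : HasDerivAt (fun l : ℝ => (l - x) / e) (1 / e) l :=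
      ((hasDerivAt_id l).sub_const x).div_const e
    convert h1.arctan using 1
    unfold pois
    have := pois_den_pos he l x
    have h2 : (1 : ℝ) + ((l - x) / e) ^ 2 ≠ 0 := by positivity
    field_simp
    ring
  have hc : Continuous fun l => pois e l x := by
    unfold pois
    exact continuous_const.div (by fun_prop) fun l => (pois_den_pos he l x).ne.symm
  rw [intervalIntegral.integral_eq_sub_of_hasDerivAt hd (hc.intervalIntegrable _ _)]
  have h1 := Real.arctan_lt_pi_div_two ((b - x) / e)
  have h2 := Real.neg_pi_div_two_lt_arctan ((a - x) / e)
  linarith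

variable {n : ℕ} {T : L2 n →ₗ.[ℂ] L2 n} {fc : (ℝ → ℂ) → (L2 n →L[ℂ] L2 n)}
  (hS : IsSelfAdjoint T) (hfc : IsBorelFunctionalCalculus T fc)

/-- The Poisson kernel corresponds to the operator `e R(l + ie) R(l - ie)`. -/
lemma fcL_poisB {e : ℝ} (he : 0 < e) (l : ℝ) :
    fcL hS hfc (poisB he l) = (e : ℂ) • (fc (resF (zp l e))).comp (fc (resF (zp l (-e)))) := by
  have hl : (zp l e).im ≠ 0 := he.ne'
  have hm : (zp l (-e)).im ≠ 0 := (neg_lt_zero.2 he).ne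
  have bzw : ∃ M, ∀ x, ‖resF (zp l e) x * resF (zp l (-e)) x‖ ≤ M :=
    ⟨|(zp l e).im|⁻¹ * |(zp l (-e)).im|⁻¹, fun x => by
      rw [norm_mul]; gcongr
      exacts [norm_resF_le hl x, norm_resF_le hm x]⟩
  rw [fcL_apply, ← hfc.map_mul _ _ (resF_meas _) (resF_meas _) ⟨_, norm_resF_le hl⟩
    ⟨_, norm_resF_le hm⟩, ← fc_smul hS hfc (f := fun x => resF (zp l e) x * resF (zp l (-e)) x) _ ((resF_meas _).mul (resF_meas _)) bzw]
  congr 1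
  ext x
  exact pois_eq_mul he l x

/-- The jump of the resolvent across the real axis is `2i` times the Poisson operator. -/
lemma fcL_poisB_sub {e : ℝ} (he : 0 < e) (l : ℝ) :
    fc (resF (zp l e)) - fc (resF (zp l (-e))) =
      (2 * Complex.I) • fcL hS hfc (poisB he l) := by
  have hl : (zp l e).im ≠ 0 := he.ne'
  have hm : (zp l (-e)).im ≠ 0 := (neg_lt_zero.2 he).ne
  rw [rs_sub_rs' hS hfc hl hm, fcL_poisB, smul_smul]
  congr 1
  apply Complex.ext <;> simp [zp]
  ring

lemma fcL_poisB_quad {e : ℝ} (he : 0 < e) (l : ℝ) (u : L2 n) :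
    inner ℂ u (fcL hS hfc (poisB he l) u) = ((e * ‖fc (resF (zp l (-e))) u‖ ^ 2 : ℝ) : ℂ) := by
  have hm : (zp l (-e)).im ≠ 0 := (neg_lt_zero.2 he).ne
  have h := rs_adjoint hS hfc hm u (fc (resF (zp l (-e))) u)
  rw [conj_zp, neg_neg] at h
  rw [fcL_poisB, smul_apply, ContinuousLinearMap.comp_apply, inner_smul_right, ← h,
    inner_self_eq_norm_sq_to_K]
  push_cast; rfl

lemma fcL_poisB_quad' {e : ℝ} (he : 0 < e) (l : ℝ) (u : L2 n) :
    inner ℂ u (fcL hS hfc (poisB he l) u) = ((e * ‖fc (resF (zp l e)) u‖ ^ 2 : ℝ) : ℂ) := by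
  have hl : (zp l e).im ≠ 0 := he.ne'
  have hm : (zp l (-e)).im ≠ 0 := (neg_lt_zero.2 he).ne
  have h := rs_adjoint hS hfc hl u (fc (resF (zp l e)) u)
  rw [conj_zp] at h
  rw [fcL_poisB, rs_comm hfc hl hm, smul_apply, ContinuousLinearMap.comp_apply, inner_smul_right,
    ← h, inner_self_eq_norm_sq_to_K]
  push_cast; rfl

lemma continuous_rs {e : ℝ} (he : e ≠ 0) (hS : IsSelfAdjoint T)
    (hfc : IsBorelFunctionalCalculus T fc) : Continuous fun l => fc (resF (zp l e)) := by
  rw [continuous_iff_continuousAt]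
  intro l
  have h1 : ContinuousAt (fun w => fc (resF w)) (zp l e) := rs_continuousAt hS hfc he
  have h2 : Continuous fun l => zp l e := by
    have : (fun l => zp l e) = fun l : ℝ => (l : ℂ) + e * Complex.I := by
      ext l; apply Complex.ext <;> simp [zp]
    rw [this]; fun_prop
  exact ContinuousAt.comp (f := fun l => zp l e) h1 h2.continuousAt

lemma integral_poisB_apply {e : ℝ} (he : 0 < e) {f : ℝ → ℂ} (hf : Continuous f) (a b x : ℝ) :
    (∫ l in a..b, f l • poisB he l) x = ∫ l in a..b, f l * (pois e l x : ℂ) := by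
  have hc : Continuous fun l => f l • poisB he l := hf.smul (poisB_continuous he)
  have := (BoundedContinuousFunction.evalCLM ℂ x :
    BoundedContinuousFunction ℝ ℂ →L[ℂ] ℂ).intervalIntegral_comp_comm
    (hc.intervalIntegrable (μ := volume) a b)
  simp only [BoundedContinuousFunction.evalCLM_apply] at this
  rw [← this]
  rfl

/-- The spectral weight of `u` seen through the resolvent has total mass at most `π ‖u‖²`. -/
lemma integral_rs_sq_le {e : ℝ} (he : 0 < e) {a b : ℝ} (hab : a ≤ b) (hS : IsSelfAdjoint T)
    (hfc : IsBorelFunctionalCalculus T fc) (u : L2 n) :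
    ∫ l in a..b, e * ‖fc (resF (zp l (-e))) u‖ ^ 2 ≤ π * ‖u‖ ^ 2 := by
  have hc := poisB_continuous he
  let q : BoundedContinuousFunction ℝ ℂ →L[ℂ] ℂ :=
    (innerSL ℂ u).comp ((ContinuousLinearMap.apply ℂ (L2 n) u).comp (fcL hS hfc))
  have hq : ∀ g, q g = inner ℂ u (fcL hS hfc g u) := fun g => rfl
  have h1 := q.intervalIntegral_comp_comm (hc.intervalIntegrable (μ := volume) a b)
  simp only [hq, fcL_poisB_quad, intervalIntegral.integral_ofReal] at h1
  have h2 : ‖∫ l in a..b, poisB he l‖ ≤ π := by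
    rw [BoundedContinuousFunction.norm_le pi_pos.le]
    intro x
    have := integral_poisB_apply he (f := fun _ => 1) continuous_const a b x
    simp only [one_smul, one_mul, intervalIntegral.integral_ofReal] at this
    rw [this, Complex.norm_real, Real.norm_eq_abs, abs_of_nonneg
      (intervalIntegral.integral_nonneg hab fun l _ => pois_nonneg he l x)]
    exact integral_pois_le he x a b
  have h3 : ‖inner ℂ u (fcL hS hfc (∫ l in a..b, poisB he l) u)‖ ≤ π * ‖u‖ ^ 2 := by
    refine (norm_inner_le_norm _ _).trans ?_
    have h4 : ‖fcL hS hfc (∫ l in a..b, poisB he l)‖ ≤ π :=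
      hfc.norm_le _ _ (BoundedContinuousFunction.continuous _).measurable
        fun x => (BoundedContinuousFunction.norm_coe_le_norm _ x).trans h2
    have h5 := ContinuousLinearMap.le_of_opNorm_le _ h4 u
    calc ‖u‖ * _ ≤ ‖u‖ * (π * ‖u‖) := by gcongr
      _ = _ := by ring
  rw [← h1, Complex.norm_real] at h3
  exact (le_abs_self _).trans h3

end Poisson

/-! ### Energy cutoffs and the mixed term -/

section Kato

variable {n : ℕ} {T : L2 n →ₗ.[ℂ] L2 n} {fc : (ℝ → ℂ) → (L2 n →L[ℂ] L2 n)}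

lemma zp_eq (l e : ℝ) : (l : ℂ) + e * Complex.I = zp l e := by
  apply Complex.ext <;> simp [zp]

/-- The indicator function of a set of energies. -/
def cut (S : Set ℝ) : ℝ → ℂ := S.indicator fun _ => 1

lemma cut_meas {S : Set ℝ} (hS : MeasurableSet S) : Measurable (cut S) :=
  measurable_const.indicator hS

lemma norm_cut_le (S : Set ℝ) (x : ℝ) : ‖cut S x‖ ≤ 1 := by
  unfold cut
  by_cases h : x ∈ S <;> simp [h]

lemma norm_fc_cut_le (hfc : IsBorelFunctionalCalculus T fc) {S : Set ℝ} (hS : MeasurableSet S)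
    (v : L2 n) : ‖fc (cut S) v‖ ≤ ‖v‖ := by
  simpa using (fc (cut S)).le_of_opNorm_le (hfc.norm_le _ 1 (cut_meas hS) (norm_cut_le S)) v

lemma rs_cut_comm (hfc : IsBorelFunctionalCalculus T fc) {S : Set ℝ} (hS : MeasurableSet S)
    {z : ℂ} (hz : z.im ≠ 0) (v : L2 n) :
    fc (resF z) (fc (cut S) v) = fc (cut S) (fc (resF z) v) := by
  have h1 := hfc.map_mul _ _ (resF_meas z) (cut_meas hS) ⟨_, norm_resF_le hz⟩ ⟨1, norm_cut_le S⟩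
  have h2 := hfc.map_mul _ _ (cut_meas hS) (resF_meas z) ⟨1, norm_cut_le S⟩ ⟨_, norm_resF_le hz⟩
  have h3 : (fun x => resF z x * cut S x) = fun x => cut S x * resF z x := by ext x; ring
  rw [h3, h2] at h1
  exact congrArg (fun L : L2 n →L[ℂ] L2 n => L v) h1.symm

/-- Away from the energies selected by the cutoff the resolvent is bounded by the inverse
distance. -/
lemma norm_rs_cut_le (hfc : IsBorelFunctionalCalculus T fc) {S : Set ℝ} (hS : MeasurableSet S)
    {z : ℂ} (hz : z.im ≠ 0) {d : ℝ} (hd : 0 < d) (h : ∀ x ∈ S, d ≤ ‖(x : ℂ) - z‖) (v : L2 n) :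
    ‖fc (resF z) (fc (cut S) v)‖ ≤ d⁻¹ * ‖v‖ := by
  have h1 := hfc.map_mul _ _ (resF_meas z) (cut_meas hS) ⟨_, norm_resF_le hz⟩ ⟨1, norm_cut_le S⟩
  rw [← ContinuousLinearMap.comp_apply, ← h1]
  refine ContinuousLinearMap.le_of_opNorm_le _ (hfc.norm_le _ _
    ((resF_meas z).mul (cut_meas hS)) fun x => ?_) v
  change ‖((x : ℂ) - z)⁻¹ * S.indicator (fun _ => (1 : ℂ)) x‖ ≤ d⁻¹
  by_cases hx : x ∈ S
  · rw [indicator_of_mem hx, mul_one, norm_inv]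
    exact inv_anti₀ hd (h x hx)
  · rw [indicator_of_notMem hx, mul_zero, norm_zero]
    positivity

lemma fc_cut_add (hfc : IsBorelFunctionalCalculus T fc) {S : Set ℝ} (hS : MeasurableSet S)
    (v : L2 n) : fc (cut S) v + fc (cut Sᶜ) v = v := by
  have h1 := hfc.map_add _ _ (cut_meas hS) (cut_meas hS.compl) ⟨1, norm_cut_le S⟩
    ⟨1, norm_cut_le Sᶜ⟩
  have h2 : (fun x => cut S x + cut Sᶜ x) = fun _ => 1 := by
    ext x; unfold cut
    by_cases hx : x ∈ S <;> simp [hx]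
  rw [h2, hfc.map_one] at h1
  exact (congrArg (fun L : L2 n →L[ℂ] L2 n => L v) h1).symm

/-- The `T T*` argument: the weighted resolvent bound controls `Im z · ‖A R(z)‖²`. -/
lemma eps_weighted_sq_le (hS : IsSelfAdjoint T) (hfc : IsBorelFunctionalCalculus T fc)
    {l e c : ℝ} (he : 0 < e) (hp : ∀ w, ‖wA n (fc (resF (zp l e)) (wA n w))‖ ≤ c * ‖w‖)
    (hm : ∀ w, ‖wA n (fc (resF (zp l (-e))) (wA n w))‖ ≤ c * ‖w‖) (v : L2 n) :
    e * ‖wA n (fc (resF (zp l e)) v)‖ ^ 2 ≤ c * ‖v‖ ^ 2 := by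
  have hl : (zp l e).im ≠ 0 := he.ne'
  set X := wA n (fc (resF (zp l e)) v) with hX
  set Y := fc (resF (zp l (-e))) (wA n X) with hY
  have h1 : ‖X‖ ^ 2 ≤ ‖v‖ * ‖Y‖ := by
    have e1 : inner ℂ X X = inner ℂ v Y := by
      conv_lhs => rw [hX]
      rw [wA_symm, rs_adjoint hS hfc hl, conj_zp]
    have e2 := norm_inner_le_norm (𝕜 := ℂ) v Y
    rw [← e1, inner_self_eq_norm_sq_to_K] at e2
    simpa using e2
  have h2 : e * ‖Y‖ ^ 2 ≤ c * ‖X‖ ^ 2 := by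
    have e1 := fcL_poisB_quad hS hfc he l (wA n X)
    have e2 : inner ℂ (wA n X) ((fc (resF (zp l e)) - fc (resF (zp l (-e)))) (wA n X)) =
        2 * Complex.I * inner ℂ (wA n X) (fcL hS hfc (poisB he l) (wA n X)) := by
      rw [fcL_poisB_sub hS hfc he l, smul_apply, inner_smul_right]
    have e3 : ‖inner ℂ (wA n X) ((fc (resF (zp l e)) - fc (resF (zp l (-e)))) (wA n X))‖ ≤
        2 * (c * ‖X‖ ^ 2) := by
      rw [wA_symm, sub_apply, map_sub]
      refine (norm_inner_le_norm _ _).trans ?_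
      have := (norm_sub_le (wA n (fc (resF (zp l e)) (wA n X)))
        (wA n (fc (resF (zp l (-e))) (wA n X)))).trans (add_le_add (hp X) (hm X))
      calc ‖X‖ * _ ≤ ‖X‖ * (c * ‖X‖ + c * ‖X‖) := by gcongr
        _ = _ := by ring
    rw [e2, e1, norm_mul, Complex.norm_real, Real.norm_eq_abs, abs_of_nonneg (by positivity)] at e3
    have e4 : ‖2 * Complex.I‖ = 2 := by simp
    rw [e4] at e3
    linarith
  rcases eq_or_lt_of_le (norm_nonneg X) with h0 | h0
  · rw [← h0] at h1 ⊢
    by_cases hv : ‖v‖ = 0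
    · rw [hv]; simp
    · have : 0 ≤ c := by
        have := (norm_nonneg _).trans (hp v)
        exact nonneg_of_mul_nonneg_left this (lt_of_le_of_ne (norm_nonneg v) (Ne.symm hv))
      simp only [ne_eq, OfNat.ofNat_ne_zero, not_false_eq_true, zero_pow, mul_zero]
      positivity
  · have h3 : ‖X‖ ^ 2 * (e * ‖X‖ ^ 2) ≤ ‖X‖ ^ 2 * (c * ‖v‖ ^ 2) := by
      calc ‖X‖ ^ 2 * (e * ‖X‖ ^ 2) = e * (‖X‖ ^ 2) ^ 2 := by ring
        _ ≤ e * (‖v‖ * ‖Y‖) ^ 2 := by gcongr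
        _ = ‖v‖ ^ 2 * (e * ‖Y‖ ^ 2) := by ring
        _ ≤ ‖v‖ ^ 2 * (c * ‖X‖ ^ 2) := by gcongr
        _ = _ := by ring
    exact le_of_mul_le_mul_left h3 (by positivity)

/-- Contour integration: the mixed term `⟨A R(z̄) u, A R(z) u⟩` is the boundary value of a function
holomorphic in the upper half plane and decaying like `|z|⁻²`. -/
lemma norm_integral_mixed_le (hS : IsSelfAdjoint T) (hfc : IsBorelFunctionalCalculus T fc)
    {S : Set ℝ} (hSm : MeasurableSet S) {M N e : ℝ} (hM : 0 < M) (hSM : ∀ x ∈ S, |x| ≤ M)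
    (hN : 2 * M ≤ N) (hN1 : 1 ≤ N) (he : 0 < e) (he1 : e ≤ 1) (u : L2 n) :
    ‖∫ l in (-N)..N, inner ℂ (wA n (fc (resF (zp l (-e))) (fc (cut S) u)))
      (wA n (fc (resF (zp l e)) (fc (cut S) u)))‖ ≤ 24 * ‖u‖ ^ 2 / N := by
  have hN0 : 0 < N := by linarith
  set v := fc (cut S) u with hv
  let F : ℂ → ℂ := fun z => inner ℂ v (fc (resF z) (wA n (wA n (fc (resF z) v))))
  have hF : ∀ z : ℂ, z.im ≠ 0 →
      F z = inner ℂ (wA n (fc (resF (conj z)) v)) (wA n (fc (resF z) v)) := by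
    intro z hz
    have hz' : (conj z).im ≠ 0 := by simpa using hz
    have := rs_adjoint hS hfc hz' v (wA n (wA n (fc (resF z) v)))
    rw [Complex.conj_conj] at this
    simp only [F]
    rw [← this, wA_symm]
  have hdiff : ∀ z : ℂ, z.im ≠ 0 → DifferentiableAt ℂ F z := by
    intro z hz
    have h := rs_differentiableAt hS hfc hz
    exact (innerSL ℂ v).differentiableAt.comp z (h.clm_apply
      (((wA n).comp (wA n)).differentiableAt.comp z (h.clm_apply (differentiableAt_const v))))
  have hbound : ∀ z : ℂ, z.im ≠ 0 → (∀ x ∈ S, N / 2 ≤ ‖(x : ℂ) - z‖) →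
      ‖F z‖ ≤ 4 * ‖u‖ ^ 2 / N ^ 2 := by
    intro z hz hd
    have hz' : (conj z).im ≠ 0 := by simpa using hz
    have hd' : ∀ x ∈ S, N / 2 ≤ ‖(x : ℂ) - conj z‖ := by
      intro x hx
      have : (x : ℂ) - conj z = conj ((x : ℂ) - z) := by simp
      rw [this, Complex.norm_conj]
      exact hd x hx
    rw [hF z hz]
    refine (norm_inner_le_norm _ _).trans ?_
    have h1 := (norm_wA_apply_le _).trans (norm_rs_cut_le hfc hSm hz (by positivity) hd u)
    have h2 := (norm_wA_apply_le _).trans (norm_rs_cut_le hfc hSm hz' (by positivity) hd' u)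
    calc _ ≤ ((N / 2)⁻¹ * ‖u‖) * ((N / 2)⁻¹ * ‖u‖) := by gcongr
      _ = _ := by field_simp; ring
  have hrect := Complex.integral_boundary_rect_eq_zero_of_differentiableOn F (zp (-N) e) (zp N N) (by
    intro z hz
    refine (hdiff z ?_).differentiableWithinAt
    have h1 : z.im ∈ uIcc e N := hz.2
    rw [uIcc_of_le (by linarith)] at h1
    exact (lt_of_lt_of_le he h1.1).ne')
  have r1 : (zp (-N) e).re = -N := rfl
  have r2 : (zp N N).re = N := rfl
  have r3 : (zp (-N) e).im = e := rfl
  have r4 : (zp N N).im = N := rfl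
  simp only [r1, r2, r3, r4, zp_eq] at hrect
  have c1 : ‖∫ l in (-N)..N, F (zp l N)‖ ≤ 8 * ‖u‖ ^ 2 / N := by
    have := intervalIntegral.norm_integral_le_of_norm_le_const (a := -N) (b := N)
      (f := fun l => F (zp l N)) (C := 4 * ‖u‖ ^ 2 / N ^ 2) (fun l _ => hbound _ hN0.ne' fun x _ => by
        have := im_le_norm_sub (zp l N) x
        rw [show (zp l N).im = N from rfl, abs_of_pos hN0] at this
        linarith)
    refine this.trans (le_of_eq ?_)
    rw [abs_of_pos (by linarith)]
    field_simp
    ring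
  have c2 : ∀ s : ℝ, |s| = N → ‖∫ y in e..N, F (zp s y)‖ ≤ 4 * ‖u‖ ^ 2 / N := by
    intro s hs
    have := intervalIntegral.norm_integral_le_of_norm_le_const (a := e) (b := N)
      (f := fun y => F (zp s y)) (C := 4 * ‖u‖ ^ 2 / N ^ 2) (fun y hy => by
        rw [uIoc_of_le (by linarith)] at hy
        refine hbound _ (lt_trans he hy.1).ne' fun x hx => ?_
        have h1 := re_le_norm_sub (zp s y) x
        have h2 := hSM x hx
        have h3 := abs_sub_abs_le_abs_sub s x
        rw [show (zp s y).re = s from rfl, abs_sub_comm] at h1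
        linarith)
    refine this.trans ?_
    rw [abs_of_nonneg (by linarith)]
    calc 4 * ‖u‖ ^ 2 / N ^ 2 * (N - e) ≤ 4 * ‖u‖ ^ 2 / N ^ 2 * N := by gcongr; linarith
      _ = _ := by field_simp
  have hmain : ∫ l in (-N)..N, F (zp l e) = (∫ l in (-N)..N, F (zp l N)) -
      Complex.I • (∫ y in e..N, F (zp N y)) + Complex.I • ∫ y in e..N, F (zp (-N) y) := by
    linear_combination hrect
  have hconv : ∫ l in (-N)..N, inner ℂ (wA n (fc (resF (zp l (-e))) v))
      (wA n (fc (resF (zp l e)) v)) = ∫ l in (-N)..N, F (zp l e) := by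
    congr 1; ext l
    rw [hF (zp l e) he.ne', conj_zp]
  rw [hconv, hmain]
  have d1 := c2 N (abs_of_pos hN0)
  have d2 := c2 (-N) (by rw [abs_neg, abs_of_pos hN0])
  have d3 := norm_add_le ((∫ l in (-N)..N, F (zp l N)) - Complex.I • (∫ y in e..N, F (zp N y)))
    (Complex.I • ∫ y in e..N, F (zp (-N) y))
  have d4 := norm_sub_le (∫ l in (-N)..N, F (zp l N)) (Complex.I • (∫ y in e..N, F (zp N y)))
  rw [norm_smul, Complex.norm_I, one_mul] at d3 d4
  have d5 : 24 * ‖u‖ ^ 2 / N = 8 * ‖u‖ ^ 2 / N + 4 * (4 * ‖u‖ ^ 2 / N) := by ring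
  have d6 : 0 ≤ 4 * ‖u‖ ^ 2 / N := by positivity
  linarith

end Kato

/-! ### Kato smoothing for the free operator -/

section KatoFree

variable {n : ℕ} {T₀ : L2 n →ₗ.[ℂ] L2 n} {fc₀ : (ℝ → ℂ) → (L2 n →L[ℂ] L2 n)}

/-- The constant in the global bound for `Im z · ‖A R₀(z) E‖²`, `E` an energy cutoff. -/
def kU (n : ℕ) : ℝ := 2 * lapC n + 16

lemma kU_pos (n : ℕ) : 0 < kU n := by
  have := lapC_pos n
  unfold kU; linarith

/-- The bound on `Im z · ‖A R₀(z) E‖²` for all real parts `l`, `E` being the spectral projection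
to `[a/2, 2b]`: limiting absorption for `l ≥ a/4`, and distance to the energy window otherwise. -/
lemma kato_uniform (hn : 4 ≤ n) (hT₀ : IsSchrodingerOp (fun _ => (0 : ℝ)) T₀)
    (hfc₀ : IsBorelFunctionalCalculus T₀ fc₀) {a b e : ℝ} (ha : 4 ≤ a)
    (he : 0 < e) (he1 : e ≤ 1) (l : ℝ) (v : L2 n) :
    e * ‖wA n (fc₀ (resF (zp l e)) (fc₀ (cut (Icc (a / 2) (2 * b))) v))‖ ^ 2 ≤
      kU n / √a * ‖v‖ ^ 2 := by
  have hsa : 0 < √a := Real.sqrt_pos.2 (by linarith)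
  have hL := lapC_pos n
  have hE := norm_fc_cut_le hfc₀ (measurableSet_Icc (a := a / 2) (b := 2 * b)) v
  set w := fc₀ (cut (Icc (a / 2) (2 * b))) v with hw
  rcases le_or_gt (a / 4) l with hl | hl
  · have hl1 : 1 ≤ l := by linarith
    have hp := norm_weighted_rs_le hn hT₀ hfc₀ (z := zp l e) hl1 he.ne'
      (by rw [show (zp l e).im = e from rfl, abs_of_pos he]; exact he1)
    have hm := norm_weighted_rs_le hn hT₀ hfc₀ (z := zp l (-e)) hl1 (neg_lt_zero.2 he).ne
      (by rw [show (zp l (-e)).im = -e from rfl, abs_neg, abs_of_pos he]; exact he1)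
    have h1 := eps_weighted_sq_le hT₀.selfAdjoint hfc₀ he hp hm w
    rw [show (zp l e).re = l from rfl] at h1
    refine h1.trans ?_
    have h2 : √a / 2 ≤ √l := by
      rw [show √a / 2 = √(a / 4) by
        rw [Real.sqrt_div (by linarith), show (4 : ℝ) = 2 ^ 2 by norm_num, Real.sqrt_sq (by norm_num)]]
      exact Real.sqrt_le_sqrt hl
    have h3 : lapC n / √l ≤ kU n / √a := by
      calc lapC n / √l ≤ lapC n / (√a / 2) := by gcongr
        _ = 2 * lapC n / √a := by field_simp
        _ ≤ kU n / √a := by unfold kU; gcongr; linarith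
    have := kU_pos n
    gcongr
  · have h1 := norm_rs_cut_le hfc₀ (measurableSet_Icc (a := a / 2) (b := 2 * b)) (z := zp l e) he.ne'
      (d := a / 4) (by linarith) (fun x hx => by
        have h1 := re_le_norm_sub (zp l e) x
        have h2 := le_abs_self (x - l)
        have h3 := hx.1
        rw [show (zp l e).re = l from rfl] at h1
        linarith) v
    have h2 := (norm_wA_apply_le _).trans h1
    have h3 : ((a / 4)⁻¹) ^ 2 ≤ kU n / √a := by
      have h4 : √a ^ 2 = a := Real.sq_sqrt (by linarith)
      have h5 : 1 ≤ √a := by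
        rw [show (1 : ℝ) = √1 by simp]; exact Real.sqrt_le_sqrt (by linarith)
      have h6 : √a ≤ a ^ 2 := by nlinarith
      calc ((a / 4)⁻¹) ^ 2 = 16 / a ^ 2 := by field_simp; norm_num
        _ ≤ 16 / √a := by gcongr
        _ ≤ kU n / √a := by unfold kU; gcongr; linarith
    calc _ ≤ 1 * ((a / 4)⁻¹ * ‖v‖) ^ 2 := by gcongr
      _ = ((a / 4)⁻¹) ^ 2 * ‖v‖ ^ 2 := by ring
      _ ≤ _ := by gcongr

set_option maxHeartbeats 400000 in
/-- Kato smoothness of the weight on the energy-localised part of `u`. -/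
lemma kato_loc (hn : 4 ≤ n) (hT₀ : IsSchrodingerOp (fun _ => (0 : ℝ)) T₀)
    (hfc₀ : IsBorelFunctionalCalculus T₀ fc₀) {a b e : ℝ} (ha : 4 ≤ a) (hab : a ≤ b)
    (he : 0 < e) (he1 : e ≤ 1) (u : L2 n) :
    ∫ l in a..b, (‖wA n (fc₀ (resF (zp l e)) (fc₀ (cut (Icc (a / 2) (2 * b))) u))‖ ^ 2 +
      ‖wA n (fc₀ (resF (zp l (-e))) (fc₀ (cut (Icc (a / 2) (2 * b))) u))‖ ^ 2) ≤
      (4 * π + 1) * (kU n / √a) * ‖u‖ ^ 2 := by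
  have hS := hT₀.selfAdjoint
  have hsa : 0 < √a := Real.sqrt_pos.2 (by linarith)
  set K := kU n / √a with hK
  have hK0 : 0 < K := div_pos (kU_pos n) hsa
  have hSm : MeasurableSet (Icc (a / 2) (2 * b)) := measurableSet_Icc
  set N : ℝ := 4 * b + 48 / K with hN
  have hNK : 0 < 48 / K := by positivity
  have hN0 : 0 < N := by rw [hN]; linarith
  have hem : -e ≠ 0 := (neg_lt_zero.2 he).ne
  set v := fc₀ (cut (Icc (a / 2) (2 * b))) u with hv
  set P : ℝ → L2 n := fun l => wA n (fc₀ (resF (zp l e)) v) with hP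
  set Q : ℝ → L2 n := fun l => wA n (fc₀ (resF (zp l (-e))) v) with hQ
  have hPc : Continuous P := (wA n).continuous.comp ((continuous_rs he.ne' hS hfc₀).clm_apply continuous_const)
  have hQc : Continuous Q := (wA n).continuous.comp ((continuous_rs hem hS hfc₀).clm_apply continuous_const)
  have hmix := norm_integral_mixed_le hS hfc₀ hSm (M := 2 * b) (N := N) (by linarith)
    (fun x hx => by rw [abs_of_nonneg (by linarith [hx.1])]; exact hx.2)
    (by rw [hN]; linarith) (by rw [hN]; linarith) he he1 u
  change ‖∫ l in (-N)..N, inner ℂ (Q l) (P l)‖ ≤ _ at hmix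
  have hid : ∀ l, ‖P l‖ ^ 2 + ‖Q l‖ ^ 2 = ‖P l - Q l‖ ^ 2 + 2 * RCLike.re (inner ℂ (Q l) (P l)) := by
    intro l
    have := norm_sub_sq (𝕜 := ℂ) (Q l) (P l)
    rw [norm_sub_rev]
    linarith
  have hdiff : ∀ l, ‖P l - Q l‖ ^ 2 ≤ 4 * K * (e * ‖fc₀ (resF (zp l (-e))) u‖ ^ 2) := by
    intro l
    have h1 : P l - Q l = (2 * Complex.I * e) • wA n (fc₀ (resF (zp l e))
        (fc₀ (cut (Icc (a / 2) (2 * b))) (fc₀ (resF (zp l (-e))) u))) := by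
      have h2 := congrArg (fun L : L2 n →L[ℂ] L2 n => wA n (L v)) (fcL_poisB_sub hS hfc₀ he l)
      simp only [sub_apply, map_sub, fcL_poisB, smul_apply, map_smul,
        ContinuousLinearMap.comp_apply] at h2
      have hc : fc₀ (resF (zp l (-e))) v =
          fc₀ (cut (Icc (a / 2) (2 * b))) (fc₀ (resF (zp l (-e))) u) :=
        rs_cut_comm hfc₀ hSm (z := zp l (-e)) hem u
      rw [← hc, ← smul_smul]
      exact h2
    have h3 := kato_uniform (b := b) hn hT₀ hfc₀ ha he he1 l (fc₀ (resF (zp l (-e))) u)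
    rw [h1, norm_smul, mul_pow]
    have h4 : ‖2 * Complex.I * (e : ℂ)‖ = 2 * e := by
      simp [abs_of_pos he]
    rw [h4]
    rw [← hK] at h3
    have h5 := mul_le_mul_of_nonneg_left h3 (by positivity : 0 ≤ 4 * e)
    linarith
  have hPQ : Continuous fun l => ‖P l‖ ^ 2 + ‖Q l‖ ^ 2 := by fun_prop
  have hRc : Continuous fun l => fc₀ (resF (zp l (-e))) u :=
    (continuous_rs hem hS hfc₀).clm_apply continuous_const
  have hIc : Continuous fun l => inner ℂ (Q l) (P l) := hQc.inner hPc
  have hre : ∫ l in (-N)..N, RCLike.re (inner ℂ (Q l) (P l)) ≤ 24 * ‖u‖ ^ 2 / N := by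
    have h1 := (RCLike.reCLM (K := ℂ)).intervalIntegral_comp_comm
      (hIc.intervalIntegrable (μ := volume) (-N) N)
    simp only [RCLike.reCLM_apply] at h1
    rw [h1]
    exact (RCLike.re_le_norm _).trans hmix
  have hmono : ∫ l in a..b, (‖P l‖ ^ 2 + ‖Q l‖ ^ 2) ≤ ∫ l in (-N)..N, (‖P l‖ ^ 2 + ‖Q l‖ ^ 2) := by
    refine intervalIntegral.integral_mono_interval (by linarith) hab (by rw [hN]; linarith)
      (Eventually.of_forall fun l => by positivity) (hPQ.intervalIntegrable _ _)
  refine hmono.trans ?_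
  have hsum : ∫ l in (-N)..N, (‖P l‖ ^ 2 + ‖Q l‖ ^ 2) =
      (∫ l in (-N)..N, ‖P l - Q l‖ ^ 2) + 2 * ∫ l in (-N)..N, RCLike.re (inner ℂ (Q l) (P l)) := by
    rw [← intervalIntegral.integral_const_mul, ← intervalIntegral.integral_add]
    · simp only [hid]
    · exact Continuous.intervalIntegrable (by fun_prop) _ _
    · exact Continuous.intervalIntegrable
        (continuous_const.mul (RCLike.continuous_re.comp hIc)) _ _
  have hd2 : ∫ l in (-N)..N, ‖P l - Q l‖ ^ 2 ≤ 4 * K * (π * ‖u‖ ^ 2) := by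
    calc _ ≤ ∫ l in (-N)..N, 4 * K * (e * ‖fc₀ (resF (zp l (-e))) u‖ ^ 2) := by
          refine intervalIntegral.integral_mono_on (by linarith) ?_ ?_ fun l _ => hdiff l
          · exact Continuous.intervalIntegrable ((hPc.sub hQc).norm.pow 2) _ _
          · exact Continuous.intervalIntegrable
              (continuous_const.mul (continuous_const.mul (hRc.norm.pow 2))) _ _
      _ ≤ _ := by
          rw [intervalIntegral.integral_const_mul]
          gcongr
          exact integral_rs_sq_le he (by linarith) hS hfc₀ u
  have hlast : 2 * (24 * ‖u‖ ^ 2 / N) ≤ K * ‖u‖ ^ 2 := by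
    have h1 : 48 / N ≤ K := by
      rw [div_le_iff₀ hN0, hN]
      have h2 : K * (48 / K) = 48 := by
        rw [mul_comm]; exact div_mul_cancel₀ _ hK0.ne'
      have h3 : 0 ≤ K * (4 * b) := mul_nonneg hK0.le (by linarith)
      rw [mul_add, h2]
      linarith
    calc 2 * (24 * ‖u‖ ^ 2 / N) = 48 / N * ‖u‖ ^ 2 := by ring
      _ ≤ _ := by gcongr
  rw [hsum]
  calc _ ≤ 4 * K * (π * ‖u‖ ^ 2) + 2 * (24 * ‖u‖ ^ 2 / N) := by gcongr
    _ ≤ 4 * K * (π * ‖u‖ ^ 2) + K * ‖u‖ ^ 2 := by gcongr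
    _ = _ := by ring

/-- Constant in the smoothing estimate on energy windows `[a, b]` with `b ≤ κ a`. -/
def katoC (n : ℕ) (κ : ℝ) : ℝ := 2 * (4 * π + 1) * kU n + 8 * κ

/-- Kato smoothing on the energy window `[a, b]`, uniformly in the distance `e` to the real axis.
Only the part of `u` with energies in `[a/2, 2b]` is singular there. -/
lemma kato (hn : 4 ≤ n) (hT₀ : IsSchrodingerOp (fun _ => (0 : ℝ)) T₀)
    (hfc₀ : IsBorelFunctionalCalculus T₀ fc₀) {a b e κ : ℝ} (ha : 4 ≤ a) (hab : a ≤ b)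
    (hκ : b ≤ κ * a) (he : 0 < e) (he1 : e ≤ 1) {s : ℝ} (hs : s = e ∨ s = -e) (u : L2 n) :
    ∫ l in a..b, ‖wA n (fc₀ (resF (zp l s)) u)‖ ^ 2 ≤ katoC n κ / √a * ‖u‖ ^ 2 := by
  have hS := hT₀.selfAdjoint
  have hsa : 0 < √a := Real.sqrt_pos.2 (by linarith)
  have hs0 : s ≠ 0 := by rcases hs with rfl | rfl; exacts [he.ne', (neg_lt_zero.2 he).ne]
  have hSm : MeasurableSet (Icc (a / 2) (2 * b)) := measurableSet_Icc
  set v := fc₀ (cut (Icc (a / 2) (2 * b))) u with hv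
  set w := fc₀ (cut (Icc (a / 2) (2 * b))ᶜ) u with hw
  have huvw : v + w = u := fc_cut_add hfc₀ hSm u
  have hcont : ∀ {s : ℝ}, s ≠ 0 → ∀ f : L2 n, Continuous fun l => wA n (fc₀ (resF (zp l s)) f) :=
    fun hs f => (wA n).continuous.comp ((continuous_rs hs hS hfc₀).clm_apply continuous_const)
  have hcs := hcont hs0
  have hloc : ∫ l in a..b, ‖wA n (fc₀ (resF (zp l s)) v)‖ ^ 2 ≤
      (4 * π + 1) * (kU n / √a) * ‖u‖ ^ 2 := by
    refine le_trans ?_ (kato_loc hn hT₀ hfc₀ ha hab he he1 u)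
    have c1 := hcont he.ne' v
    have c2 := hcont (neg_lt_zero.2 he).ne v
    refine intervalIntegral.integral_mono_on hab ?_ ?_ fun l _ => ?_
    · exact Continuous.intervalIntegrable ((hcs v).norm.pow 2) _ _
    · exact Continuous.intervalIntegrable ((c1.norm.pow 2).add (c2.norm.pow 2)) _ _
    · rcases hs with rfl | rfl
      · exact le_add_of_nonneg_right (by positivity)
      · exact le_add_of_nonneg_left (by positivity)
  have hfar : ∀ l ∈ Icc a b, ‖wA n (fc₀ (resF (zp l s)) w)‖ ^ 2 ≤ 4 / a ^ 2 * ‖u‖ ^ 2 := by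
    intro l hl
    have h1 := norm_rs_cut_le hfc₀ hSm.compl (z := zp l s) hs0 (d := a / 2) (by linarith)
      (fun x hx => by
        have h1 := re_le_norm_sub (zp l s) x
        rw [show (zp l s).re = l from rfl] at h1
        refine le_trans ?_ h1
        rw [le_abs]
        simp only [mem_compl_iff, mem_Icc, not_and_or, not_le] at hx
        rcases hx with hx | hx
        · right; linarith [hl.1]
        · left; linarith [hl.2]) u
    have h2 := (norm_wA_apply_le _).trans h1
    calc _ ≤ ((a / 2)⁻¹ * ‖u‖) ^ 2 := by gcongr
      _ = _ := by field_simp; ring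
  have hpt : ∀ l ∈ Icc a b, ‖wA n (fc₀ (resF (zp l s)) u)‖ ^ 2 ≤
      2 * ‖wA n (fc₀ (resF (zp l s)) v)‖ ^ 2 + 2 * (4 / a ^ 2 * ‖u‖ ^ 2) := by
    intro l hl
    have h1 := hfar l hl
    have h2 : ‖wA n (fc₀ (resF (zp l s)) u)‖ ≤ ‖wA n (fc₀ (resF (zp l s)) v)‖ +
        ‖wA n (fc₀ (resF (zp l s)) w)‖ := by
      conv_lhs => rw [← huvw]
      rw [map_add, map_add]
      exact norm_add_le _ _
    have h3 : ‖wA n (fc₀ (resF (zp l s)) u)‖ ^ 2 ≤ (‖wA n (fc₀ (resF (zp l s)) v)‖ +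
        ‖wA n (fc₀ (resF (zp l s)) w)‖) ^ 2 := by gcongr
    nlinarith [sq_nonneg (‖wA n (fc₀ (resF (zp l s)) v)‖ - ‖wA n (fc₀ (resF (zp l s)) w)‖)]
  have hi : IntervalIntegrable (fun l => ‖wA n (fc₀ (resF (zp l s)) v)‖ ^ 2) volume a b :=
    Continuous.intervalIntegrable ((hcs v).norm.pow 2) _ _
  have h1 := intervalIntegral.integral_mono_on hab
    (Continuous.intervalIntegrable ((hcs u).norm.pow 2) a b)
    ((hi.const_mul 2).add intervalIntegrable_const) hpt
  rw [intervalIntegral.integral_add (hi.const_mul 2) intervalIntegrable_const,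
    intervalIntegral.integral_const_mul, intervalIntegral.integral_const, smul_eq_mul] at h1
  refine h1.trans ?_
  have h5 : (b - a) * (4 / a ^ 2) ≤ 4 * κ / √a := by
    have h4 : √a ^ 2 = a := Real.sq_sqrt (by linarith)
    have h5 : 1 ≤ √a := by
      rw [show (1 : ℝ) = √1 by simp]; exact Real.sqrt_le_sqrt (by linarith)
    have hκ0 : 0 ≤ κ := by
      by_contra hc
      nlinarith
    calc (b - a) * (4 / a ^ 2) ≤ κ * a * (4 / a ^ 2) := by gcongr; linarith
      _ = 4 * κ / a := by field_simp
      _ ≤ 4 * κ / √a := by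
        gcongr
        nlinarith
  have h6 : (b - a) * (2 * (4 / a ^ 2 * ‖u‖ ^ 2)) ≤ 8 * κ / √a * ‖u‖ ^ 2 := by
    calc _ = 2 * ‖u‖ ^ 2 * ((b - a) * (4 / a ^ 2)) := by ring
      _ ≤ 2 * ‖u‖ ^ 2 * (4 * κ / √a) := by gcongr
      _ = _ := by ring
  have h7 : katoC n κ / √a * ‖u‖ ^ 2 =
      2 * ((4 * π + 1) * (kU n / √a) * ‖u‖ ^ 2) + 8 * κ / √a * ‖u‖ ^ 2 := by
    unfold katoC; ring
  rw [h7]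
  linarith

end KatoFree

/-! ### Stone's formula and comparison of functional calculi -/

section Stone

/-- The Poisson integral after the rescaling `l = x + e y`. -/
lemma integral_pois_rescale {e : ℝ} (he : 0 < e) (f : ℝ → ℂ) (x : ℝ) :
    ∫ l, f l * (pois e l x : ℂ) = ∫ y, f (x + e * y) * (((1 + y ^ 2)⁻¹ : ℝ) : ℂ) := by
  have h1 : ∫ l, f l * (pois e l x : ℂ) = ∫ l, f (x + l) * (pois e (x + l) x : ℂ) :=
    (integral_add_left_eq_self (fun l => f l * (pois e l x : ℂ)) x).symm
  have h2 := Measure.integral_comp_mul_left (fun l => f (x + l) * (pois e (x + l) x : ℂ)) e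
  have h3 : ∀ y, f (x + e * y) * (pois e (x + e * y) x : ℂ) =
      (e⁻¹ : ℂ) * (f (x + e * y) * (((1 + y ^ 2)⁻¹ : ℝ) : ℂ)) := by
    intro y
    have : pois e (x + e * y) x = e⁻¹ * (1 + y ^ 2)⁻¹ := by
      unfold pois
      rw [show (x - (x + e * y)) ^ 2 + e ^ 2 = e ^ 2 * (1 + y ^ 2) by ring]
      field_simp
    rw [this]; push_cast; ring
  simp only [h3] at h2
  rw [integral_const_mul, abs_of_pos (inv_pos.2 he), Complex.real_smul, Complex.ofReal_inv] at h2
  rw [h1]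
  exact (mul_left_cancel₀ (inv_ne_zero (Complex.ofReal_ne_zero.2 he.ne')) h2).symm

/-- The Poisson kernel is an approximate identity. -/
lemma tendsto_integral_pois {f : ℝ → ℂ} (hf : Continuous f) {M : ℝ} (hM : ∀ x, ‖f x‖ ≤ M)
    {a b : ℝ} (hs : Function.support f ⊆ Ioc a b) (x : ℝ) :
    Tendsto (fun k : ℕ => (π⁻¹ : ℂ) * ∫ l in a..b, f l * (pois (1 / ((k : ℝ) + 1)) l x : ℂ))
      atTop (𝓝 (f x)) := by
  have hpos : ∀ k : ℕ, 0 < 1 / ((k : ℝ) + 1) := fun k => by positivity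
  have h1 : ∀ k : ℕ, ∫ l in a..b, f l * (pois (1 / ((k : ℝ) + 1)) l x : ℂ) =
      ∫ y, f (x + 1 / ((k : ℝ) + 1) * y) * (((1 + y ^ 2)⁻¹ : ℝ) : ℂ) := by
    intro k
    rw [← integral_pois_rescale (hpos k)]
    exact intervalIntegral.integral_eq_integral_of_support_subset
      ((Function.support_mul_subset_left _ _).trans hs)
  simp only [h1]
  have hlim : Tendsto (fun k : ℕ => ∫ y, f (x + 1 / ((k : ℝ) + 1) * y) *
      (((1 + y ^ 2)⁻¹ : ℝ) : ℂ)) atTop (𝓝 (∫ y : ℝ, f x * (((1 + y ^ 2)⁻¹ : ℝ) : ℂ))) := by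
    refine tendsto_integral_of_dominated_convergence (fun y => M * (1 + y ^ 2)⁻¹) ?_ ?_ ?_ ?_
    · intro k
      refine Continuous.aestronglyMeasurable ?_
      refine (hf.comp (by fun_prop)).mul (Complex.continuous_ofReal.comp ?_)
      exact Continuous.inv₀ (by fun_prop) fun y => by positivity
    · exact integrable_inv_one_add_sq.const_mul M
    · intro k
      refine Eventually.of_forall fun y => ?_
      have : 0 < (1 + y ^ 2)⁻¹ := by positivity
      rw [norm_mul, Complex.norm_real, Real.norm_eq_abs, abs_of_pos this]
      gcongr
      exact hM _
    · refine Eventually.of_forall fun y => ?_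
      refine Tendsto.mul_const _ ?_
      have h2 : Tendsto (fun k : ℕ => x + 1 / ((k : ℝ) + 1) * y) atTop (𝓝 (x + 0 * y)) :=
        (tendsto_one_div_add_atTop_nhds_zero_nat.mul_const y).const_add x
      rw [zero_mul, add_zero] at h2
      exact (hf.tendsto x).comp h2
  have h3 := hlim.const_mul (π⁻¹ : ℂ)
  rw [integral_const_mul, integral_complex_ofReal, integral_univ_inv_one_add_sq] at h3
  have hpi : (π : ℂ) ≠ 0 := Complex.ofReal_ne_zero.2 pi_ne_zero
  rwa [show (π⁻¹ : ℂ) * (f x * (π : ℂ)) = f x by field_simp] at h3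

lemma norm_integral_pois_le {f : ℝ → ℂ} {M : ℝ} (hM : ∀ x, ‖f x‖ ≤ M)
    {a b : ℝ} (hab : a ≤ b) {e : ℝ} (he : 0 < e) (x : ℝ) :
    ‖(π⁻¹ : ℂ) * ∫ l in a..b, f l * (pois e l x : ℂ)‖ ≤ M := by
  have hM0 : 0 ≤ M := (norm_nonneg _).trans (hM 0)
  have hc : Continuous fun l => pois e l x := by
    unfold pois
    exact continuous_const.div (by fun_prop) fun l => (pois_den_pos he l x).ne'
  have h1 : ‖∫ l in a..b, f l * (pois e l x : ℂ)‖ ≤ ∫ l in a..b, M * pois e l x := by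
    refine intervalIntegral.norm_integral_le_of_norm_le hab (Eventually.of_forall fun l _ => ?_)
      (Continuous.intervalIntegrable (by fun_prop) _ _)
    rw [norm_mul, Complex.norm_real, Real.norm_eq_abs, abs_of_nonneg (pois_nonneg he l x)]
    have := pois_nonneg he l x
    gcongr
    exact hM l
  rw [intervalIntegral.integral_const_mul] at h1
  have h2 : M * ∫ l in a..b, pois e l x ≤ M * π := by
    gcongr; exact integral_pois_le he x a b
  rw [norm_mul, norm_inv, Complex.norm_real, Real.norm_eq_abs, abs_of_pos pi_pos]
  calc π⁻¹ * _ ≤ π⁻¹ * (M * π) := by gcongr; exact h1.trans h2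
    _ = M := by field_simp

variable {n : ℕ} {T : L2 n →ₗ.[ℂ] L2 n} {fc : (ℝ → ℂ) → (L2 n →L[ℂ] L2 n)}

/-- Stone's formula: `fc f` is the strong limit of the Poisson integrals of `f`. -/
lemma stone (hS : IsSelfAdjoint T) (hfc : IsBorelFunctionalCalculus T fc)
    {f : ℝ → ℂ} (hf : Continuous f) {M : ℝ} (hM : ∀ x, ‖f x‖ ≤ M)
    {a b : ℝ} (hab : a ≤ b) (hs : Function.support f ⊆ Ioc a b)
    (hp : ∀ k : ℕ, 0 < 1 / ((k : ℝ) + 1)) (u : L2 n) :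
    Tendsto (fun k : ℕ => (π⁻¹ : ℂ) • fcL hS hfc (∫ l in a..b, f l • poisB (hp k) l) u) atTop
      (𝓝 (fc f u)) := by
  have key := hfc.tendsto_of_ptwise
    (fun k x => ((π⁻¹ : ℂ) • ∫ l in a..b, f l • poisB (hp k) l :
      BoundedContinuousFunction ℝ ℂ) x) f M
    (fun k => (BoundedContinuousFunction.continuous _).measurable) hf.measurable
    (fun k x => by
      rw [BoundedContinuousFunction.smul_apply, integral_poisB_apply (hp k) hf, smul_eq_mul]
      exact norm_integral_pois_le hM hab (hp k) x)
    (fun x => by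
      simp only [BoundedContinuousFunction.smul_apply, integral_poisB_apply (hp _) hf, smul_eq_mul]
      exact tendsto_integral_pois hf hM hs x) u
  refine key.congr fun k => ?_
  have := congrArg (fun L : L2 n →L[ℂ] L2 n => L u)
    (map_smul (fcL hS hfc) (π⁻¹ : ℂ) (∫ l in a..b, f l • poisB (hp k) l))
  exact this

end Stone

section Comparison

/-- An operator norm bound from a quadratic bound on the sesquilinear form. -/
lemma opNorm_le_of_quadratic {n : ℕ} {D : L2 n →L[ℂ] L2 n} {K : ℝ} (hK : 0 ≤ K)
    (h : ∀ u v : L2 n, ‖inner ℂ v (D u)‖ ≤ K * (‖u‖ ^ 2 + ‖v‖ ^ 2)) : ‖D‖ ≤ 2 * K := by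
  refine D.opNorm_le_bound (by positivity) fun u => ?_
  rcases eq_or_lt_of_le (norm_nonneg (D u)) with h0 | h0
  · rw [← h0]; positivity
  rcases eq_or_lt_of_le (norm_nonneg u) with h1 | h1
  · have : u = 0 := norm_eq_zero.1 h1.symm
    simp [this]
  -- Test against the vector of norm `‖u‖` in the direction of `D u`.
  have h2 := h u (((‖u‖ / ‖D u‖ : ℝ) : ℂ) • D u)
  have hp : 0 ≤ ‖u‖ / ‖D u‖ := by positivity
  rw [inner_smul_left, norm_mul, inner_self_eq_norm_sq_to_K, norm_smul, RCLike.norm_conj,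
    Complex.norm_real, Real.norm_eq_abs, abs_of_nonneg hp, div_mul_cancel₀ _ h0.ne'] at h2
  have h3 : ‖((‖D u‖ : ℂ) ^ 2)‖ = ‖D u‖ ^ 2 := by simp
  have h4 : ‖u‖ / ‖D u‖ * ‖D u‖ ^ 2 ≤ K * (‖u‖ ^ 2 + ‖u‖ ^ 2) := by
    rw [← h3]; exact h2
  have h5 : ‖u‖ / ‖D u‖ * ‖D u‖ ^ 2 = ‖u‖ * ‖D u‖ := by field_simp
  rw [h5] at h4
  refine le_of_mul_le_mul_left ?_ h1
  linarith

variable {n : ℕ} {V : Euc n → ℝ} {T₀ T : L2 n →ₗ.[ℂ] L2 n}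
  {fc₀ fc : (ℝ → ℂ) → (L2 n →L[ℂ] L2 n)} {B W : L2 n →L[ℂ] L2 n} {c : ℝ}

/-- The difference of the resolvents, as a form, is controlled by the free weighted resolvents. -/
lemma inner_rs_sub_le (hT₀ : IsSchrodingerOp (fun _ => (0 : ℝ)) T₀)
    (hfc₀ : IsBorelFunctionalCalculus T₀ fc₀) (hT : IsSchrodingerOp V T)
    (hfc : IsBorelFunctionalCalculus T fc) (hn : 4 ≤ n)
    (hB : ∀ u : L2 n, B u =ᵐ[volume] fun x => (V x : ℂ) * u x)
    (hBs : ∀ u v : L2 n, inner ℂ (B u) v = inner ℂ u (B v))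
    (hW : ‖W‖ ≤ c) (hBW : ∀ u, B u = wA n (W (wA n u)))
    {l s : ℝ} (hre : 1 ≤ l) (hs : s ≠ 0) (hs1 : |s| ≤ 1)
    (hlarge : 2 * (lapC n * c) ≤ √l) (u v : L2 n) :
    ‖inner ℂ v (fc (resF (zp l s)) u - fc₀ (resF (zp l s)) u)‖ ≤
      c * (‖wA n (fc₀ (resF (zp l (-s))) v)‖ ^ 2 + ‖wA n (fc₀ (resF (zp l s)) u)‖ ^ 2) := by
  have hc0 : 0 ≤ c := (norm_nonneg W).trans hW
  have hs' : (zp l (-s)).im ≠ 0 := neg_ne_zero.2 hs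
  have h1 := second_resolvent hT₀ hfc₀ hT hfc hB (z := zp l s) hs u
  have h2 := weighted_rs_le hT₀ hfc₀ hT hfc hn hB hBs hW hBW (z := zp l (-s)) hre hs'
    (by rw [show (zp l (-s)).im = -s from rfl, abs_neg]; exact hs1) hlarge v
  have h3 := rs_adjoint hT.selfAdjoint hfc hs' v (B (fc₀ (resF (zp l s)) u))
  rw [conj_zp, neg_neg] at h3
  rw [h1, sub_sub_cancel_left, inner_neg_right, norm_neg, ← h3, hBW, ← wA_symm]
  refine (norm_inner_le_norm _ _).trans ?_
  have h4 := W.le_of_opNorm_le hW (wA n (fc₀ (resF (zp l s)) u))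
  calc _ ≤ (2 * ‖wA n (fc₀ (resF (zp l (-s))) v)‖) * (c * ‖wA n (fc₀ (resF (zp l s)) u)‖) := by
        gcongr
    _ = c * (2 * ‖wA n (fc₀ (resF (zp l (-s))) v)‖ * ‖wA n (fc₀ (resF (zp l s)) u)‖) := by ring
    _ ≤ _ := by
        gcongr
        exact two_mul_le_add_sq _ _

set_option maxHeartbeats 400000 in
/-- The comparison of the two functional calculi, at the level of Poisson integrals. -/
lemma inner_poisson_sub_le (hT₀ : IsSchrodingerOp (fun _ => (0 : ℝ)) T₀)
    (hfc₀ : IsBorelFunctionalCalculus T₀ fc₀) (hT : IsSchrodingerOp V T)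
    (hfc : IsBorelFunctionalCalculus T fc) (hn : 4 ≤ n)
    (hB : ∀ u : L2 n, B u =ᵐ[volume] fun x => (V x : ℂ) * u x)
    (hBs : ∀ u v : L2 n, inner ℂ (B u) v = inner ℂ u (B v))
    (hW : ‖W‖ ≤ c) (hBW : ∀ u, B u = wA n (W (wA n u)))
    {a b κ : ℝ} (ha : 4 ≤ a) (hab : a ≤ b) (hκ : b ≤ κ * a) (hlarge : 2 * (lapC n * c) ≤ √a)
    {f : ℝ → ℂ} (hf : Continuous f) {M : ℝ} (hM : ∀ x, ‖f x‖ ≤ M)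
    {e : ℝ} (he : 0 < e) (he1 : e ≤ 1) (u v : L2 n) :
    ‖inner ℂ v (fcL hT.selfAdjoint hfc (∫ l in a..b, f l • poisB he l) u -
      fcL hT₀.selfAdjoint hfc₀ (∫ l in a..b, f l • poisB he l) u)‖ ≤
      M * c * (katoC n κ / √a) * (‖u‖ ^ 2 + ‖v‖ ^ 2) := by
  have hM0 : 0 ≤ M := (norm_nonneg _).trans (hM 0)
  have hc0 : 0 ≤ c := (norm_nonneg W).trans hW
  have hem : -e ≠ 0 := (neg_lt_zero.2 he).ne
  have hS := hT.selfAdjoint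
  have hS₀ := hT₀.selfAdjoint
  let q : BoundedContinuousFunction ℝ ℂ →L[ℂ] ℂ :=
    (innerSL ℂ v).comp ((ContinuousLinearMap.apply ℂ (L2 n) u).comp (fcL hS hfc - fcL hS₀ hfc₀))
  have hq : ∀ g, q g = inner ℂ v (fcL hS hfc g u - fcL hS₀ hfc₀ g u) := fun g => rfl
  have hc : Continuous fun l => f l • poisB he l := hf.smul (poisB_continuous he)
  have h1 := q.intervalIntegral_comp_comm (hc.intervalIntegrable (μ := volume) a b)
  rw [← hq, ← h1]
  let N : ℝ → L2 n → ℝ → ℝ := fun s w l => ‖wA n (fc₀ (resF (zp l s)) w)‖ ^ 2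
  have hNc : ∀ {s : ℝ}, s ≠ 0 → ∀ w, Continuous (N s w) := fun hs w =>
    ((wA n).continuous.comp ((continuous_rs hs hS₀ hfc₀).clm_apply continuous_const)).norm.pow 2
  have hpt : ∀ l ∈ Icc a b, ‖q (f l • poisB he l)‖ ≤
      M * (c / 2) * ((N (-e) v l + N e u l) + (N e v l + N (-e) u l)) := by
    intro l hl
    have hl1 : 1 ≤ l := by linarith [hl.1]
    have hlar : 2 * (lapC n * c) ≤ √l := hlarge.trans (Real.sqrt_le_sqrt hl.1)
    have g1 := inner_rs_sub_le hT₀ hfc₀ hT hfc hn hB hBs hW hBW hl1 he.ne'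
      (by rwa [abs_of_pos he]) hlar u v
    have g2 := inner_rs_sub_le hT₀ hfc₀ hT hfc hn hB hBs hW hBW hl1 hem
      (by rwa [abs_neg, abs_of_pos he]) hlar u v
    rw [neg_neg] at g2
    have g3 : 2 * Complex.I * q (poisB he l) =
        inner ℂ v (fc (resF (zp l e)) u - fc₀ (resF (zp l e)) u) -
        inner ℂ v (fc (resF (zp l (-e))) u - fc₀ (resF (zp l (-e))) u) := by
      have e1 := congrArg (fun L : L2 n →L[ℂ] L2 n => inner ℂ v (L u)) (fcL_poisB_sub hS hfc he l)
      have e2 := congrArg (fun L : L2 n →L[ℂ] L2 n => inner ℂ v (L u))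
        (fcL_poisB_sub hS₀ hfc₀ he l)
      simp only [sub_apply, smul_apply, inner_sub_right, inner_smul_right] at e1 e2
      rw [hq, inner_sub_right, inner_sub_right, inner_sub_right]
      linear_combination e2 - e1
    have g4 : 2 * ‖q (poisB he l)‖ ≤ c * (N (-e) v l + N e u l) + c * (N e v l + N (-e) u l) := by
      have e1 : ‖2 * Complex.I * q (poisB he l)‖ = 2 * ‖q (poisB he l)‖ := by simp
      rw [← e1, g3]
      exact (norm_sub_le _ _).trans (add_le_add g1 g2)
    rw [map_smul, norm_smul]
    calc ‖f l‖ * ‖q (poisB he l)‖ ≤ M * ‖q (poisB he l)‖ := by gcongr; exact hM l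
      _ ≤ M * ((c * (N (-e) v l + N e u l) + c * (N e v l + N (-e) u l)) / 2) := by
          gcongr; linarith
      _ = _ := by ring
  have i1 := (hNc hem v).intervalIntegrable (μ := volume) a b
  have i2 := (hNc he.ne' u).intervalIntegrable (μ := volume) a b
  have i3 := (hNc he.ne' v).intervalIntegrable (μ := volume) a b
  have i4 := (hNc hem u).intervalIntegrable (μ := volume) a b
  have h2 := intervalIntegral.norm_integral_le_of_norm_le hab
    (Eventually.of_forall fun l hl => hpt l (Ioc_subset_Icc_self hl))
    (((i1.add i2).add (i3.add i4)).const_mul (M * (c / 2)))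
  refine h2.trans ?_
  rw [intervalIntegral.integral_const_mul, intervalIntegral.integral_add (i1.add i2) (i3.add i4),
    intervalIntegral.integral_add i1 i2, intervalIntegral.integral_add i3 i4]
  have k1 := kato hn hT₀ hfc₀ ha hab hκ he he1 (Or.inr rfl) v
  have k2 := kato hn hT₀ hfc₀ ha hab hκ he he1 (Or.inl rfl) u
  have k3 := kato hn hT₀ hfc₀ ha hab hκ he he1 (Or.inl rfl) v
  have k4 := kato hn hT₀ hfc₀ ha hab hκ he he1 (Or.inr rfl) u
  calc _ ≤ M * (c / 2) * ((katoC n κ / √a * ‖v‖ ^ 2 + katoC n κ / √a * ‖u‖ ^ 2) +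
        (katoC n κ / √a * ‖v‖ ^ 2 + katoC n κ / √a * ‖u‖ ^ 2)) := by
        exact mul_le_mul_of_nonneg_left (add_le_add (add_le_add k1 k2) (add_le_add k3 k4))
          (by positivity)
    _ = _ := by ring

/-- High-energy comparison of the two functional calculi on functions supported in `(a, b]`. -/
lemma norm_fc_sub_le (hT₀ : IsSchrodingerOp (fun _ => (0 : ℝ)) T₀)
    (hfc₀ : IsBorelFunctionalCalculus T₀ fc₀) (hT : IsSchrodingerOp V T)
    (hfc : IsBorelFunctionalCalculus T fc) (hn : 4 ≤ n)
    (hB : ∀ u : L2 n, B u =ᵐ[volume] fun x => (V x : ℂ) * u x)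
    (hBs : ∀ u v : L2 n, inner ℂ (B u) v = inner ℂ u (B v))
    (hW : ‖W‖ ≤ c) (hBW : ∀ u, B u = wA n (W (wA n u)))
    {a b κ : ℝ} (ha : 4 ≤ a) (hab : a ≤ b) (hκ : b ≤ κ * a) (hlarge : 2 * (lapC n * c) ≤ √a)
    {f : ℝ → ℂ} (hf : Continuous f) {M : ℝ} (hM : ∀ x, ‖f x‖ ≤ M)
    (hs : Function.support f ⊆ Ioc a b) :
    ‖fc f - fc₀ f‖ ≤ 2 * (M * c * (katoC n κ / √a)) := by
  have hM0 : 0 ≤ M := (norm_nonneg _).trans (hM 0)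
  have hc0 : 0 ≤ c := (norm_nonneg W).trans hW
  have hκ0 : 0 ≤ κ := by
    by_contra hc
    nlinarith
  have hk0 : 0 ≤ katoC n κ := by
    have := kU_pos n
    have := pi_pos
    unfold katoC; positivity
  have hp : ∀ k : ℕ, 0 < 1 / ((k : ℝ) + 1) := fun k => by positivity
  refine opNorm_le_of_quadratic (by positivity) fun u v => ?_
  have l1 := stone hT.selfAdjoint hfc hf hM hab hs hp u
  have l2 := stone hT₀.selfAdjoint hfc₀ hf hM hab hs hp u
  have l3 := ((continuous_const (y := v)).inner (𝕜 := ℂ) continuous_id).norm.tendsto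
    (fc f u - fc₀ f u)
  refine le_of_tendsto (l3.comp (l1.sub l2)) (Eventually.of_forall fun k => ?_)
  have hk1 : 1 / ((k : ℝ) + 1) ≤ 1 := by
    rw [div_le_one (by positivity)]; linarith [Nat.cast_nonneg (α := ℝ) k]
  have h1 := inner_poisson_sub_le hT₀ hfc₀ hT hfc hn hB hBs hW hBW ha hab hκ hlarge hf hM (hp k)
    hk1 u v
  simp only [Function.comp_apply, id_eq]
  rw [← smul_sub, inner_smul_right, norm_mul, norm_inv, Complex.norm_real, Real.norm_eq_abs,
    abs_of_pos pi_pos]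
  have h2 : π⁻¹ ≤ 1 := inv_le_one_of_one_le₀ (by linarith [pi_gt_three])
  calc _ ≤ 1 * _ := mul_le_mul_of_nonneg_right h2 (norm_nonneg _)
    _ ≤ _ := by rw [one_mul]; exact h1

end Comparison

/-! ### High-frequency bound for the difference of propagators -/

/-- The factorization `V = A W A` with `A = ⟨x⟩^{-3/2}` and `W = ⟨x⟩³ V` bounded. -/
lemma exists_factorization {n : ℕ} {V : Euc n → ℝ} (hVmeas : Measurable V) {C₀ δ : ℝ}
    (hC₀ : 0 < C₀) (hδ : 3 ≤ δ) (hV : ∀ x, |V x| ≤ C₀ * jb x ^ (-δ)) :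
    ∃ B W : L2 n →L[ℂ] L2 n, (∀ u : L2 n, B u =ᵐ[volume] fun x => (V x : ℂ) * u x) ∧
      (∀ u v : L2 n, inner ℂ (B u) v = inner ℂ u (B v)) ∧ ‖W‖ ≤ C₀ ∧
      ∀ u, B u = wA n (W (wA n u)) := by
  let W : L2 n →L[ℂ] L2 n := mulOp (fun x => V x * wt (3 / 2) x)
    (hVmeas.mul (measurable_wt _)) C₀ (abs_weighted_potential_le hC₀ hδ hV)
  refine ⟨(wA n).comp (W.comp (wA n)), W, fun u => ?_, fun u v => ?_, norm_mulOp_le hC₀.le,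
    fun u => rfl⟩
  · have h1 : wA n (W (wA n u)) =ᵐ[volume] fun x => ((wt (-3 / 4) x : ℝ) : ℂ) * W (wA n u) x :=
      coeFn_mulOp _
    have h2 : W (wA n u) =ᵐ[volume] fun x => ((V x * wt (3 / 2) x : ℝ) : ℂ) * wA n u x :=
      coeFn_mulOp _
    have h3 : wA n u =ᵐ[volume] fun x => ((wt (-3 / 4) x : ℝ) : ℂ) * u x := coeFn_mulOp _
    filter_upwards [h1, h2, h3] with x e1 e2 e3
    change wA n (W (wA n u)) x = _
    rw [e1, e2, e3]
    have h4 : wt (-3 / 4) x * (wt (3 / 2) x * wt (-3 / 4) x) = 1 := by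
      rw [wt_mul, wt_mul]
      norm_num [wt]
    have h5 : ((wt (-3 / 4) x : ℝ) : ℂ) * (((wt (3 / 2) x : ℝ) : ℂ) * ((wt (-3 / 4) x : ℝ) : ℂ)) = 1 := by
      exact_mod_cast h4
    push_cast
    linear_combination (V x : ℂ) * u x * h5
  · change inner ℂ (wA n (W (wA n u))) v = inner ℂ u (wA n (W (wA n v)))
    rw [wA_symm, mulOp_symm, wA_symm]

/-- **Theorem 3.1.** `‖Ψ(t;h)‖_{L²→L²} ≤ C h` where
`Ψ(t;h) = e^{itG} ψ(h²G) − e^{itG₀} ψ(h²G₀)`. -/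
theorem Psi_L2_L2_bound
    (n : ℕ) (hn : 4 ≤ n) (V : Euc n → ℝ) (hVmeas : Measurable V)
    (C₀ δ : ℝ) (hC₀ : 0 < C₀) (hδ : ((n : ℝ) + 2) / 2 < δ)
    (hV : ∀ x, |V x| ≤ C₀ * jb x ^ (-δ))
    (T₀ : L2 n →ₗ.[ℂ] L2 n) (hT₀ : IsSchrodingerOp (fun _ => (0 : ℝ)) T₀)
    (fc₀ : (ℝ → ℂ) → (L2 n →L[ℂ] L2 n)) (hfc₀ : IsBorelFunctionalCalculus T₀ fc₀)
    (T : L2 n →ₗ.[ℂ] L2 n) (hT : IsSchrodingerOp V T)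
    (fc : (ℝ → ℂ) → (L2 n →L[ℂ] L2 n)) (hfc : IsBorelFunctionalCalculus T fc)
    (ψ : ℝ → ℝ) (hψ : IsCutoff ψ) :
    ∃ C : ℝ, 0 < C ∧ ∀ (t : ℝ) (h : ℝ), 0 < h → h ≤ 1 →
      ‖fc (fun x : ℝ => Complex.exp (Complex.I * t * x) * ((ψ (h ^ 2 * x) : ℝ) : ℂ)) -
          fc₀ (fun x : ℝ => Complex.exp (Complex.I * t * x) * ((ψ (h ^ 2 * x) : ℝ) : ℂ))‖
        ≤ C * h := by
  have hδ3 : 3 ≤ δ := by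
    have : (4 : ℝ) ≤ n := by exact_mod_cast hn
    linarith
  obtain ⟨B, W, hB, hBs, hW, hBW⟩ := exists_factorization hVmeas hC₀ hδ3 hV
  obtain ⟨hsm, hcs, hsub⟩ := hψ
  have hψc : Continuous ψ := hsm.continuous
  obtain ⟨M, hM⟩ := hcs.exists_bound_of_continuous hψc
  have hM0 : 0 ≤ M := (norm_nonneg _).trans (hM 0)
  -- The support of `ψ` lies in `(α, β]` with `α > 0`.
  obtain ⟨α, hα, hαs⟩ : ∃ α : ℝ, 0 < α ∧ ∀ x ∈ tsupport ψ, α < x := by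
    rcases (tsupport ψ).eq_empty_or_nonempty with h0 | h0
    · exact ⟨1, one_pos, fun x hx => by simp [h0] at hx⟩
    · obtain ⟨x₀, hx₀, hmin⟩ := IsCompact.exists_isLeast hcs h0
      have : 0 < x₀ := hsub hx₀
      exact ⟨x₀ / 2, by linarith, fun x hx => by linarith [hmin hx]⟩
  obtain ⟨β₀, hβ₀⟩ := IsCompact.bddAbove hcs
  set β := max α β₀ with hβ
  have hαβ : α ≤ β := le_max_left _ _
  set κ := β / α with hκ
  have hκ0 : 0 < κ := div_pos (by linarith) hα
  have hk0 : 0 < katoC n κ := by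
    have := kU_pos n
    have := pi_pos
    unfold katoC; positivity
  have hsα : 0 < √α := Real.sqrt_pos.2 hα
  have hL := lapC_pos n
  set L : ℝ := 2 * (lapC n * C₀) + 2 with hLdef
  have hL2 : 2 ≤ L := by
    have : 0 < lapC n * C₀ := mul_pos hL hC₀
    rw [hLdef]; linarith
  have hL0 : 0 < L := by linarith
  refine ⟨2 * (M * C₀ * (katoC n κ / √α)) + 2 * M * (L / √α) + 1, by positivity,
    fun t h h0 h1 => ?_⟩
  set f : ℝ → ℂ := fun x => Complex.exp (Complex.I * t * x) * ((ψ (h ^ 2 * x) : ℝ) : ℂ) with hf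
  have hfc' : Continuous f := by
    refine Continuous.mul (by fun_prop) (Complex.continuous_ofReal.comp (hψc.comp (by fun_prop)))
  have hfM : ∀ x, ‖f x‖ ≤ M := by
    intro x
    have e1 : ‖Complex.exp (Complex.I * t * x)‖ = 1 := by
      rw [show Complex.I * t * x = ((t * x : ℝ) : ℂ) * Complex.I by push_cast; ring]
      exact Complex.norm_exp_ofReal_mul_I _
    rw [hf]
    simp only
    rw [norm_mul, e1, one_mul, Complex.norm_real]
    exact hM _
  have hh2 : 0 < h ^ 2 := by positivity
  rcases le_or_gt L (√α / h) with hlarge | hsmall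
  · have hsa : √(α / h ^ 2) = √α / h := by
      rw [Real.sqrt_div hα.le, Real.sqrt_sq h0.le]
    have ha : 4 ≤ α / h ^ 2 := by
      have e1 : (√α / h) ^ 2 = α / h ^ 2 := by rw [div_pow, Real.sq_sqrt hα.le]
      have e2 : 2 ≤ √α / h := hL2.trans hlarge
      rw [← e1]; nlinarith
    have hsupp : Function.support f ⊆ Ioc (α / h ^ 2) (β / h ^ 2) := by
      intro x hx
      have hx' : h ^ 2 * x ∈ tsupport ψ := by
        refine subset_tsupport ψ fun hc => hx ?_
        simp [hf, hc]
      rw [mem_Ioc, div_lt_iff₀ hh2, le_div_iff₀ hh2, mul_comm x]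
      exact ⟨hαs _ hx', (hβ₀ hx').trans (le_max_right _ _)⟩
    have key := norm_fc_sub_le hT₀ hfc₀ hT hfc hn hB hBs hW hBW (κ := κ) ha
      (by gcongr) (le_of_eq (by rw [hκ]; field_simp)) (by rw [hsa]; rw [hLdef] at hlarge; linarith)
      hfc' hfM hsupp
    refine key.trans ?_
    rw [hsa]
    have e3 : 2 * (M * C₀ * (katoC n κ / (√α / h))) = 2 * (M * C₀ * (katoC n κ / √α)) * h := by
      field_simp
    rw [e3]
    gcongr
    have : 0 ≤ 2 * M * (L / √α) := by positivity
    linarith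
  · -- For `h` bounded below, each term is bounded by `sup |ψ|`.
    have e1 := hfc.norm_le f M hfc'.measurable hfM
    have e2 := hfc₀.norm_le f M hfc'.measurable hfM
    have e3 : 1 ≤ L / √α * h := by
      rw [div_lt_iff₀ h0] at hsmall
      rw [div_mul_eq_mul_div, le_div_iff₀ hsα]
      linarith
    have e4 : 0 ≤ 2 * (M * C₀ * (katoC n κ / √α)) * h := by positivity
    calc ‖fc f - fc₀ f‖ ≤ 2 * M * 1 := by linarith [norm_sub_le (fc f) (fc₀ f)]
      _ ≤ 2 * M * (L / √α * h) := by gcongr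
      _ ≤ _ := by linarith
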